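/- arXiv:2309.16610 — 8 statements merged into one kernel-verified Lean document; each statement's English description precedes it below -/
import Mathlib

section
/- Let (i,j,k) be an even permutation of (1,2,3) and let ψ ∈ E_i. Then for all X ∈ V one has −2φ_i(X)·(Φ_j·ψ) + ξ_i·(X·(Φ_j·ψ)) − X·(ξ_i·(Φ_j·ψ)) = 8φ_k(X)·ψ − 2ξ_k·(X·ψ) + 2X·(ξ_k·ψ) − 4η_i(X)ξ_j·ψ + 4η_j(X)ξ_i·ψ, and −2φ_i(X)·(Φ_k·ψ) + ξ_i·(X·(Φ_k·ψ)) − X·(ξ_i·(Φ_k·ψ)) = −8φ_j(X)·ψ + 2ξ_j·(X·ψ) − 2X·(ξ_j·ψ) − 4η_i(X)ξ_k·ψ + 4η_k(X)ξ_i·ψ. -/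
noncomputable section

/- Context: an almost 3-contact metric structure on a real inner product space `V`
of dimension `4n-1` (encoded by an orthonormal basis indexed by `Fin (4*n-1)`),
a Clifford module `W` over `Cl(V, -⟨·,·⟩)` encoded by a linear map
`cl : V →ₗ[ℝ] Module.End ℝ W` satisfying the Clifford relation, the action of
2-forms on spinors, and the subbundles `E_i`.  Even permutations `(i,j,k)` of
`(1,2,3)` are encoded as `(i, i+1, i+2)` with `i : Fin 3` (cyclic addition). -/

open scoped InnerProductSpace

/-- An almost 3-contact metric structure on a real inner product space. -/
structure AlmostThreeContact (V : Type*) [NormedAddCommGroup V] [InnerProductSpace ℝ V] where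
  xi : Fin 3 → V
  phi : Fin 3 → V →ₗ[ℝ] V
  xi_orthonormal : ∀ i j : Fin 3, ⟪xi i, xi j⟫_ℝ = if i = j then 1 else 0
  phi_skew : ∀ (i : Fin 3) (X Y : V), ⟪phi i X, Y⟫_ℝ = -⟪X, phi i Y⟫_ℝ
  phi_phi : ∀ (i : Fin 3) (X : V), phi i (phi i X) = -X + ⟪xi i, X⟫_ℝ • xi i
  phi_xi_self : ∀ i : Fin 3, phi i (xi i) = 0
  phi_xi : ∀ i : Fin 3, phi i (xi (i + 1)) = xi (i + 2)
  phi_xi' : ∀ i : Fin 3, phi (i + 1) (xi i) = -xi (i + 2)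
  eta_phi : ∀ (i : Fin 3) (X : V), ⟪xi i, X⟫_ℝ = ⟪xi (i + 1), phi (i + 2) X⟫_ℝ
  eta_phi' : ∀ (i : Fin 3) (X : V), ⟪xi i, X⟫_ℝ = -⟪xi (i + 2), phi (i + 1) X⟫_ℝ
  phi_comp : ∀ (i : Fin 3) (X : V),
    phi i X = phi (i + 1) (phi (i + 2) X) - ⟪xi (i + 2), X⟫_ℝ • xi (i + 1)
  phi_comp' : ∀ (i : Fin 3) (X : V),
    phi i X = -phi (i + 2) (phi (i + 1) X) + ⟪xi (i + 1), X⟫_ℝ • xi (i + 2)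
  compat : ∀ (i : Fin 3) (X Y : V),
    ⟪phi i X, phi i Y⟫_ℝ = ⟪X, Y⟫_ℝ - ⟪xi i, X⟫_ℝ * ⟪xi i, Y⟫_ℝ

variable {V : Type*} [NormedAddCommGroup V] [InnerProductSpace ℝ V]
variable {W : Type*} [AddCommGroup W] [Module ℝ W]

/-- `W` is a module over the Clifford algebra of `(V, q)` with `q v = -⟨v,v⟩`:
the action satisfies `v·w·ψ + w·v·ψ = -2⟨v,w⟩ψ`. -/
def IsCliffordAction (cl : V →ₗ[ℝ] Module.End ℝ W) : Prop :=
  ∀ v w : V, cl v * cl w + cl w * cl v = (-(2 * ⟪v, w⟫_ℝ)) • (1 : Module.End ℝ W)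

/-- The subspace `E_i = {ψ : (-2φ_i(X) + ξ_i X - X ξ_i)·ψ = 0 for all X}`. -/
def Eset (D : AlmostThreeContact V) (cl : V →ₗ[ℝ] Module.End ℝ W) (i : Fin 3) : Set W :=
  {ψ | ∀ X : V,
    (-2 : ℝ) • cl (D.phi i X) ψ + cl (D.xi i) (cl X ψ) - cl X (cl (D.xi i) ψ) = 0}

/-- Action of a 2-form `τ` on a spinor: `τ·ψ = Σ_{p<q} τ(e_p,e_q) e_p·e_q·ψ`. -/
def formAct {m : ℕ} (b : OrthonormalBasis (Fin m) ℝ V)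
    (cl : V →ₗ[ℝ] Module.End ℝ W) (τ : V → V → ℝ) (ψ : W) : W :=
  ∑ p : Fin m, ∑ q : Fin m, if p < q then τ (b p) (b q) • cl (b p) (cl (b q) ψ) else 0

/-- The fundamental 2-form `Φ_i(X,Y) = ⟨X, φ_i(Y)⟩`. -/
def Phi (D : AlmostThreeContact V) (i : Fin 3) : V → V → ℝ := fun X Y => ⟪X, D.phi i Y⟫_ℝ

/-!
Write `A` for the skew endomorphism defining a 2-form `ω`. Clifford multiplication satisfies
`[X, ω] = 2 A X`, so `ad ω` acts as a derivation on the operators `C(X) = -2 φ_i(X) + [ξ_i, X]`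
whose common kernel is `E_i`. For `ω = Φ_j` this gives
`[C(X), ω] = 2 C(A X) + 4 [φ_i, A] X + 2 [A ξ_i, X]`; both `ω C(X)` and `C(A X)` kill `ψ ∈ E_i`,
and what remains is evaluated by the quaternionic commutation rules of the `φ`'s.
-/

attribute [local instance] LieRing.ofAssociativeRing

theorem sum_sum_ite_lt_add_swap {ι M : Type*} [Fintype ι] [LinearOrder ι] [AddCommMonoid M]
    (f : ι → ι → M) (hdiag : ∀ p, f p p = 0) :
    ∑ p, ∑ q, (if p < q then f p q + f q p else 0) = ∑ p, ∑ q, f p q := by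
  calc ∑ p, ∑ q, (if p < q then f p q + f q p else 0)
      = ∑ p, ∑ q, (if p < q then f p q else 0) + ∑ q, ∑ p, (if p < q then f q p else 0) := by
        rw [Finset.sum_comm (f := fun q p ↦ if p < q then f q p else 0)]
        simp only [← Finset.sum_add_distrib, ite_add_ite, add_zero]
    _ = ∑ p, ∑ q, f p q := by
        simp only [← Finset.sum_add_distrib]
        refine Finset.sum_congr rfl fun p _ ↦ Finset.sum_congr rfl fun q _ ↦ ?_
        rcases lt_trichotomy p q with h | rfl | h
        · simp [h, h.not_gt]
        · simp [hdiag]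
        · simp [h, h.not_gt]

section CliffordDefect

variable {R E S : Type*} [CommRing R] [AddCommGroup E] [Module R E] [AddCommGroup S] [Module R S]

/-- The operator `-2 B(X) + ξ X - X ξ` on spinors; for `B = φ_i` and `ξ = ξ_i` its vanishing for
all `X` is the equation defining `E_i`. -/
def cliffordDefect (cl : E →ₗ[R] Module.End R S) (B : Module.End R E) (ξ X : E) :
    Module.End R S :=
  (-2 : R) • cl (B X) + ⁅cl ξ, cl X⁆

theorem cliffordDefect_apply (cl : E →ₗ[R] Module.End R S) (B : Module.End R E) (ξ X : E)
    (ψ : S) :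
    cliffordDefect cl B ξ X ψ = (-2 : R) • cl (B X) ψ + cl ξ (cl X ψ) - cl X (cl ξ ψ) := by
  simp only [cliffordDefect, Ring.lie_def, LinearMap.add_apply, LinearMap.smul_apply,
    LinearMap.sub_apply, Module.End.mul_apply, add_sub_assoc]

variable {cl : E →ₗ[R] Module.End R S} {A B : Module.End R E} {F : Module.End R S}

theorem lie_cliffordDefect (hF : ∀ X, ⁅cl X, F⁆ = (2 : R) • cl (A X)) (ξ X : E) :
    ⁅cliffordDefect cl B ξ X, F⁆ = (2 : R) • cliffordDefect cl B ξ (A X)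
      + (4 : R) • cl (⁅B, A⁆ X) + (2 : R) • ⁅cl (A ξ), cl X⁆ := by
  have hbracket : ⁅⁅cl ξ, cl X⁆, F⁆ = (2 : R) • ⁅cl ξ, cl (A X)⁆ + (2 : R) • ⁅cl (A ξ), cl X⁆ := by
    rw [lie_lie, hF, hF, lie_smul, lie_smul, ← lie_skew (cl X), smul_neg, sub_neg_eq_add]
  simp only [cliffordDefect, add_lie, smul_lie, hF, hbracket, Ring.lie_def B A,
    LinearMap.sub_apply, Module.End.mul_apply, map_sub]
  module

theorem cliffordDefect_apply_of_forall_eq_zero (hF : ∀ X, ⁅cl X, F⁆ = (2 : R) • cl (A X))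
    {ξ : E} {ψ : S} (hψ : ∀ X, cliffordDefect cl B ξ X ψ = 0) (X : E) :
    cliffordDefect cl B ξ X (F ψ)
      = (4 : R) • cl (⁅B, A⁆ X) ψ + (2 : R) • ⁅cl (A ξ), cl X⁆ ψ := by
  have h := LinearMap.congr_fun (lie_cliffordDefect (B := B) hF ξ X) ψ
  simpa only [Ring.lie_def (cliffordDefect cl B ξ X) F, LinearMap.sub_apply,
    LinearMap.add_apply, LinearMap.smul_apply, Module.End.mul_apply, hψ, map_zero, sub_zero,
    smul_zero, zero_add] using h

end CliffordDefect

section TwoForm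

variable {ι : Type*} [Fintype ι] [LinearOrder ι] {cl : V →ₗ[ℝ] Module.End ℝ W}

/-- The action of a 2-form on spinors as an element of `Module.End ℝ W`, so that its commutators
with Clifford multiplications make sense; `formAct` is its value at a spinor. -/
def formEnd (b : OrthonormalBasis ι ℝ V) (cl : V →ₗ[ℝ] Module.End ℝ W) (τ : V → V → ℝ) :
    Module.End ℝ W :=
  ∑ p, ∑ q, if p < q then τ (b p) (b q) • (cl (b p) * cl (b q)) else 0

theorem formEnd_apply {m : ℕ} (b : OrthonormalBasis (Fin m) ℝ V) (τ : V → V → ℝ) (ψ : W) :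
    formEnd b cl τ ψ = formAct b cl τ ψ := by
  simp only [formEnd, formAct, LinearMap.sum_apply]
  refine Finset.sum_congr rfl fun p _ ↦ Finset.sum_congr rfl fun q _ ↦ ?_
  split_ifs <;> rfl

theorem IsCliffordAction.lie_mul (hcl : IsCliffordAction cl) (u v w : V) :
    ⁅cl u, cl v * cl w⁆ = (2 * ⟪u, w⟫_ℝ) • cl v - (2 * ⟪u, v⟫_ℝ) • cl w := by
  calc ⁅cl u, cl v * cl w⁆
      = (cl u * cl v + cl v * cl u) * cl w - cl v * (cl u * cl w + cl w * cl u) := by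
        rw [Ring.lie_def]; noncomm_ring
    _ = (2 * ⟪u, w⟫_ℝ) • cl v - (2 * ⟪u, v⟫_ℝ) • cl w := by
        rw [hcl u v, hcl u w, smul_one_mul, mul_smul_one]; module

theorem IsCliffordAction.lie_formEnd (hcl : IsCliffordAction cl) (b : OrthonormalBasis ι ℝ V)
    {A : Module.End ℝ V} (hA : ∀ X Y, ⟪A X, Y⟫_ℝ = -⟪X, A Y⟫_ℝ) (X : V) :
    ⁅cl X, formEnd b cl fun Y Z ↦ ⟪Y, A Z⟫_ℝ⁆ = (2 : ℝ) • cl (A X) := by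
  have hskew (p q : ι) : ⟪b q, A (b p)⟫_ℝ = -⟪b p, A (b q)⟫_ℝ := by rw [real_inner_comm, hA]
  let f (p q : ι) : Module.End ℝ W := (2 * ⟪b q, X⟫_ℝ * ⟪b p, A (b q)⟫_ℝ) • cl (b p)
  have hdiag (p : ι) : f p p = 0 := by
    simp only [f, self_eq_neg.mp (hskew p p), mul_zero, zero_smul]
  have hterm (p q : ι) :
      ⁅cl X, if p < q then ⟪b p, A (b q)⟫_ℝ • (cl (b p) * cl (b q)) else 0⁆
        = if p < q then f p q + f q p else 0 := by
    split_ifs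
    · rw [lie_smul, hcl.lie_mul, real_inner_comm (b q) X, real_inner_comm (b p) X]
      simp only [f, hskew p q]
      module
    · rw [lie_zero]
  calc ⁅cl X, formEnd b cl fun Y Z ↦ ⟪Y, A Z⟫_ℝ⁆
      = ∑ p, ∑ q, if p < q then f p q + f q p else 0 := by
        simp only [formEnd, lie_sum, hterm]
    _ = ∑ q, ∑ p, f p q := by rw [sum_sum_ite_lt_add_swap f hdiag, Finset.sum_comm]
    _ = ∑ q, (2 * ⟪b q, X⟫_ℝ) • cl (A (b q)) := by
        refine Finset.sum_congr rfl fun q _ ↦ ?_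
        simp only [f, mul_smul (2 * ⟪b q, X⟫_ℝ), ← Finset.smul_sum, ← map_smul cl, ← map_sum,
          b.sum_repr']
    _ = (2 : ℝ) • cl (A X) := by
        simp only [mul_smul, ← Finset.smul_sum, ← map_smul A, ← map_smul cl, ← map_sum,
          b.sum_repr']

end TwoForm

namespace AlmostThreeContact

variable (D : AlmostThreeContact V)

theorem phi_add_two_xi (i : Fin 3) : D.phi (i + 2) (D.xi i) = D.xi (i + 1) := by
  have h := D.phi_xi (i + 2)
  rwa [show i + 2 + 1 = i by grind, show i + 2 + 2 = i + 1 by grind] at h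

theorem lie_phi_add_one (i : Fin 3) (X : V) :
    ⁅D.phi i, D.phi (i + 1)⁆ X
      = (2 : ℝ) • D.phi (i + 2) X + ⟪D.xi (i + 1), X⟫_ℝ • D.xi i
        - ⟪D.xi i, X⟫_ℝ • D.xi (i + 1) := by
  have hcomp := D.phi_comp (i + 2) X
  have hcomp' := D.phi_comp' (i + 2) X
  rw [show i + 2 + 1 = i by grind, show i + 2 + 2 = i + 1 by grind] at hcomp hcomp'
  rw [Ring.lie_def, LinearMap.sub_apply, Module.End.mul_apply, Module.End.mul_apply]
  linear_combination (norm := module) -hcomp - hcomp'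

theorem lie_phi_add_two (i : Fin 3) (X : V) :
    ⁅D.phi i, D.phi (i + 2)⁆ X
      = (-2 : ℝ) • D.phi (i + 1) X + ⟪D.xi (i + 2), X⟫_ℝ • D.xi i
        - ⟪D.xi i, X⟫_ℝ • D.xi (i + 2) := by
  have h := D.lie_phi_add_one (i + 2) X
  rw [show i + 2 + 1 = i by grind, show i + 2 + 2 = i + 1 by grind] at h
  rw [← lie_skew, LinearMap.neg_apply, h]
  module

theorem mem_Eset_iff {cl : V →ₗ[ℝ] Module.End ℝ W} {i : Fin 3} {ψ : W} :
    ψ ∈ Eset D cl i ↔ ∀ X, cliffordDefect cl (D.phi i) (D.xi i) X ψ = 0 := by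
  simp only [Eset, Set.mem_ofPred_eq, cliffordDefect_apply]

theorem cliffordDefect_formAct_Phi {m : ℕ} (b : OrthonormalBasis (Fin m) ℝ V)
    {cl : V →ₗ[ℝ] Module.End ℝ W} (hcl : IsCliffordAction cl) {i : Fin 3} {ψ : W}
    (hψ : ψ ∈ Eset D cl i) (j : Fin 3) (X : V) :
    cliffordDefect cl (D.phi i) (D.xi i) X (formAct b cl (Phi D j) ψ)
      = (4 : ℝ) • cl (⁅D.phi i, D.phi j⁆ X) ψ
        + (2 : ℝ) • ⁅cl (D.phi j (D.xi i)), cl X⁆ ψ := by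
  rw [← formEnd_apply]
  exact cliffordDefect_apply_of_forall_eq_zero (hcl.lie_formEnd b (D.phi_skew j))
    (D.mem_Eset_iff.mp hψ) X

end AlmostThreeContact

/-- For `(i,j,k)` an even permutation of `(1,2,3)`, `ψ ∈ E_i`
and all `X ∈ V`:
`(-2φ_i(X) + ξ_i X - X ξ_i)·Φ_j·ψ
   = (8φ_k(X) - 2ξ_k X + 2X ξ_k - 4η_i(X)ξ_j + 4η_j(X)ξ_i)·ψ` and
`(-2φ_i(X) + ξ_i X - X ξ_i)·Φ_k·ψ
   = (-8φ_j(X) + 2ξ_j X - 2X ξ_j - 4η_i(X)ξ_k + 4η_k(X)ξ_i)·ψ`. -/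
theorem statement_0 {n : ℕ} (hn : 1 ≤ n)
    (D : AlmostThreeContact V) (b : OrthonormalBasis (Fin (4 * n - 1)) ℝ V)
    (cl : V →ₗ[ℝ] Module.End ℝ W) (hcl : IsCliffordAction cl)
    (i : Fin 3) (ψ : W) (hψ : ψ ∈ Eset D cl i) (X : V) :
    ((-2 : ℝ) • cl (D.phi i X) (formAct b cl (Phi D (i + 1)) ψ)
        + cl (D.xi i) (cl X (formAct b cl (Phi D (i + 1)) ψ))
        - cl X (cl (D.xi i) (formAct b cl (Phi D (i + 1)) ψ))
      = (8 : ℝ) • cl (D.phi (i + 2) X) ψ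
        - (2 : ℝ) • cl (D.xi (i + 2)) (cl X ψ)
        + (2 : ℝ) • cl X (cl (D.xi (i + 2)) ψ)
        - (4 * ⟪D.xi i, X⟫_ℝ) • cl (D.xi (i + 1)) ψ
        + (4 * ⟪D.xi (i + 1), X⟫_ℝ) • cl (D.xi i) ψ)
    ∧ ((-2 : ℝ) • cl (D.phi i X) (formAct b cl (Phi D (i + 2)) ψ)
        + cl (D.xi i) (cl X (formAct b cl (Phi D (i + 2)) ψ))
        - cl X (cl (D.xi i) (formAct b cl (Phi D (i + 2)) ψ))
      = (-8 : ℝ) • cl (D.phi (i + 1) X) ψ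
        + (2 : ℝ) • cl (D.xi (i + 1)) (cl X ψ)
        - (2 : ℝ) • cl X (cl (D.xi (i + 1)) ψ)
        - (4 * ⟪D.xi i, X⟫_ℝ) • cl (D.xi (i + 2)) ψ
        + (4 * ⟪D.xi (i + 2), X⟫_ℝ) • cl (D.xi i) ψ) := by
  constructor
  · rw [← cliffordDefect_apply, D.cliffordDefect_formAct_Phi b hcl hψ, D.lie_phi_add_one,
      D.phi_xi', map_neg, neg_lie, Ring.lie_def]
    simp only [map_add, map_sub, map_smul, LinearMap.add_apply, LinearMap.sub_apply,
      LinearMap.neg_apply, LinearMap.smul_apply, Module.End.mul_apply]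
    module
  · rw [← cliffordDefect_apply, D.cliffordDefect_formAct_Phi b hcl hψ, D.lie_phi_add_two,
      D.phi_add_two_xi, Ring.lie_def]
    simp only [map_add, map_sub, map_smul, LinearMap.add_apply, LinearMap.sub_apply,
      LinearMap.smul_apply, Module.End.mul_apply]
    module
end
end

section
/- Let i ∈ {1,2,3}, let ψ ∈ E_i, and let X ∈ V be a unit vector orthogonal to ξ_i. Then X·(φ_i(X)·ψ) = ξ_i·ψ. -/
noncomputable section

/- Context: an almost 3-contact metric structure on a real inner product space `V`
of dimension `4n-1` (encoded by an orthonormal basis indexed by `Fin (4*n-1)`),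
a Clifford module `W` over `Cl(V, -⟨·,·⟩)` encoded by a linear map
`cl : V →ₗ[ℝ] Module.End ℝ W` satisfying the Clifford relation, the action of
2-forms on spinors, and the subbundles `E_i`.  Even permutations `(i,j,k)` of
`(1,2,3)` are encoded as `(i, i+1, i+2)` with `i : Fin 3` (cyclic addition). -/

open scoped InnerProductSpace

variable {V : Type*} [NormedAddCommGroup V] [InnerProductSpace ℝ V]
variable {W : Type*} [AddCommGroup W] [Module ℝ W]

namespace IsCliffordAction

variable {cl : V →ₗ[ℝ] Module.End ℝ W}

theorem apply_apply_add_swap (hcl : IsCliffordAction cl) (v w : V) (ψ : W) :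
    cl v (cl w ψ) + cl w (cl v ψ) = (-(2 * ⟪v, w⟫_ℝ)) • ψ :=
  LinearMap.congr_fun (hcl v w) ψ

theorem apply_apply_self (hcl : IsCliffordAction cl) (v : V) (ψ : W) :
    cl v (cl v ψ) = (-‖v‖ ^ 2) • ψ := by
  have h := hcl.apply_apply_add_swap v v ψ
  rw [real_inner_self_eq_norm_sq] at h
  linear_combination (norm := module) (1 / 2 : ℝ) • h

theorem apply_apply_sub_swap (hcl : IsCliffordAction cl) (v w : V) (ψ : W) :
    cl v (cl w ψ) - cl w (cl v ψ) = (-2 : ℝ) • (cl w (cl v ψ) + ⟪v, w⟫_ℝ • ψ) := by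
  linear_combination (norm := module) hcl.apply_apply_add_swap v w ψ

end IsCliffordAction

/- By `hY`, `Y` acts on `ψ` as half the commutator of `ξ` and `X`, which the Clifford relation turns
into `-(X·ξ + ⟪ξ, X⟫)`; it remains to multiply by `X` and use `X·X = -‖X‖²`. -/
theorem statement_2_general {cl : V →ₗ[ℝ] Module.End ℝ W} (hcl : IsCliffordAction cl)
    {ξ X Y : V} {ψ : W}
    (hY : (-2 : ℝ) • cl Y ψ + cl ξ (cl X ψ) - cl X (cl ξ ψ) = 0) :
    cl X (cl Y ψ) = ‖X‖ ^ 2 • cl ξ ψ - ⟪ξ, X⟫_ℝ • cl X ψ := by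
  have hYψ : cl Y ψ = -(cl X (cl ξ ψ) + ⟪ξ, X⟫_ℝ • ψ) := by
    linear_combination (norm := module)
      (-1 / 2 : ℝ) • hY + (1 / 2 : ℝ) • hcl.apply_apply_sub_swap ξ X ψ
  calc cl X (cl Y ψ)
      = -(cl X (cl X (cl ξ ψ)) + ⟪ξ, X⟫_ℝ • cl X ψ) := by
        rw [hYψ, map_neg, map_add, map_smul]
    _ = -((-‖X‖ ^ 2) • cl ξ ψ + ⟪ξ, X⟫_ℝ • cl X ψ) := by rw [hcl.apply_apply_self]
    _ = ‖X‖ ^ 2 • cl ξ ψ - ⟪ξ, X⟫_ℝ • cl X ψ := by module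

/-- For `i ∈ {1,2,3}`, `ψ ∈ E_i` and `X` a unit vector
orthogonal to `ξ_i`: `X·(φ_i(X)·ψ) = ξ_i·ψ`. -/
theorem statement_2
    (D : AlmostThreeContact V)
    (cl : V →ₗ[ℝ] Module.End ℝ W) (hcl : IsCliffordAction cl)
    (i : Fin 3) (ψ : W) (hψ : ψ ∈ Eset D cl i)
    (X : V) (hX : ‖X‖ = 1) (hXxi : ⟪D.xi i, X⟫_ℝ = 0) :
    cl X (cl (D.phi i X) ψ) = cl (D.xi i) ψ := by
  simpa [hX, hXxi] using statement_2_general hcl (hψ X)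
end
end

section
/- Let (p,q,r) be an even permutation of (1,2,3) and let f_1,…,f_{4n−4} be an orthonormal basis of the horizontal subspace H := ker η_1 ∩ ker η_2 ∩ ker η_3. Then for every ψ ∈ W: Φ_p·(Φ_q·ψ) − Φ_q·(Φ_p·ψ) = −2Φ_r·ψ + Σ_{s=1}^{4n−4} φ_p(f_s)·(φ_q(f_s)·ψ). -/
noncomputable section

/- Context: an almost 3-contact metric structure on a real inner product space `V`
of dimension `4n-1` (encoded by an orthonormal basis indexed by `Fin (4*n-1)`),
a Clifford module `W` over `Cl(V, -⟨·,·⟩)` encoded by a linear map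
`cl : V →ₗ[ℝ] Module.End ℝ W` satisfying the Clifford relation, the action of
2-forms on spinors, and the subbundles `E_i`.  Even permutations `(i,j,k)` of
`(1,2,3)` are encoded as `(i, i+1, i+2)` with `i : Fin 3` (cyclic addition). -/

open scoped InnerProductSpace

variable {V : Type*} [NormedAddCommGroup V] [InnerProductSpace ℝ V]
variable {W : Type*} [AddCommGroup W] [Module ℝ W]

/-! The action of a 2-form `⟨·, φ ·⟩` on spinors is `-2 ρ(φ)`, where `ρ(φ) = ¼ ∑ₛ eₛ · φ(eₛ)` is
the spin representation of `𝔰𝔬(V)`. As `ρ` is a morphism of Lie algebras, the commutator of the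
operators `Φ_p` and `Φ_q` is `4 ρ([φ_p, φ_q])`, and the almost 3-contact relations give
`[φ_p, φ_q] = 2 φ_r + η_q ⊗ ξ_p - η_p ⊗ ξ_q`. The horizontal sum is the contraction of
`φ_p(·) · φ_q(·)` over an orthonormal basis of `V`, minus its part along the `ξ_i`; since `φ_p` is
skew, the full contraction is `-4 ρ(φ_q ∘ φ_p)`, which the same relations evaluate. -/

theorem sum_sum_if_lt_add_self {ι M : Type*} [Fintype ι] [LinearOrder ι] [AddCommMonoid M]
    {g : ι → ι → M} (hg : ∀ i j, g i j = g j i) (hg₀ : ∀ i, g i i = 0) :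
    (∑ i, ∑ j, if i < j then g i j else 0) + (∑ i, ∑ j, if i < j then g i j else 0) =
      ∑ i, ∑ j, g i j := by
  have hsplit (i j : ι) : g i j = (if i < j then g i j else 0) + (if j < i then g j i else 0) := by
    rcases lt_trichotomy i j with h | rfl | h
    · simp [h, h.not_gt]
    · simp [hg₀]
    · simp [h, h.not_gt, hg i j]
  calc (∑ i, ∑ j, if i < j then g i j else 0) + (∑ i, ∑ j, if i < j then g i j else 0)
      = (∑ i, ∑ j, if i < j then g i j else 0) + ∑ i, ∑ j, if j < i then g j i else 0 := by
        congr 1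
        exact Finset.sum_comm
    _ = ∑ i, ∑ j, g i j := by
        simp only [← Finset.sum_add_distrib, ← hsplit]

theorem orthonormal_sumElim {ι κ : Type*} {e : ι → V} {f : κ → V} (he : Orthonormal ℝ e)
    (hf : Orthonormal ℝ f) (hef : ∀ j i, ⟪e i, f j⟫_ℝ = 0) : Orthonormal ℝ (Sum.elim e f) := by
  refine ⟨Sum.rec he.1 hf.1, ?_⟩
  rintro (i | i) (j | j) hij
  · exact he.2 (ne_of_apply_ne Sum.inl hij)
  · exact hef j i
  · exact (real_inner_comm _ _).trans (hef i j)
  · exact hf.2 (ne_of_apply_ne Sum.inr hij)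

theorem exists_orthonormalBasis_coe_eq_sumElim {ι κ : Type*} [Fintype ι] [Fintype κ]
    {e : ι → V} {f : κ → V} (he : Orthonormal ℝ e) (hf : Orthonormal ℝ f)
    (hef : ∀ j i, ⟪e i, f j⟫_ℝ = 0)
    (hspan : ∀ v : V, (∀ i, ⟪e i, v⟫_ℝ = 0) → v ∈ Submodule.span ℝ (Set.range f)) :
    ∃ c : OrthonormalBasis (ι ⊕ κ) ℝ V, ⇑c = Sum.elim e f := by
  refine ⟨OrthonormalBasis.mkOfOrthogonalEqBot (orthonormal_sumElim he hf hef) ?_,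
    OrthonormalBasis.coe_of_orthogonal_eq_bot_mk _ _⟩
  refine (Submodule.eq_bot_iff _).2 fun v hv => ?_
  have hvf : v ∈ Submodule.span ℝ (Set.range f) :=
    hspan v fun i => hv (e i) (Submodule.subset_span ⟨Sum.inl i, rfl⟩)
  have hle : Submodule.span ℝ (Set.range f) ≤ Submodule.span ℝ (Set.range (Sum.elim e f)) :=
    Submodule.span_mono (by simp only [Set.Sum.elim_range, Set.subset_union_right])
  exact inner_self_eq_zero.1 (hv v (hle hvf))

section BilinearSum

open scoped TensorProduct

variable {ι M : Type*} [Fintype ι] [AddCommGroup M] [Module ℝ M]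

theorem sum_bilin_adjoint_left (b : OrthonormalBasis ι ℝ V) (B : V →ₗ[ℝ] V →ₗ[ℝ] M)
    {α β : V →ₗ[ℝ] V} (h : ∀ X Y : V, ⟪α X, Y⟫_ℝ = ⟪X, β Y⟫_ℝ) :
    ∑ i, B (α (b i)) (b i) = ∑ i, B (b i) (β (b i)) :=
  calc ∑ i, B (α (b i)) (b i) = ∑ i, ∑ j, ⟪b j, α (b i)⟫_ℝ • B (b j) (b i) := by
        refine Finset.sum_congr rfl fun i _ => ?_
        conv_lhs => rw [← b.sum_repr' (α (b i))]
        simp only [map_sum, map_smul, LinearMap.sum_apply, LinearMap.smul_apply]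
    _ = ∑ j, ∑ i, ⟪b i, β (b j)⟫_ℝ • B (b j) (b i) := by
        simp only [← h, real_inner_comm (b _) (α _)]
        exact Finset.sum_comm
    _ = ∑ j, B (b j) (β (b j)) := by
        refine Finset.sum_congr rfl fun j _ => ?_
        conv_rhs => rw [← b.sum_repr' (β (b j))]
        simp only [map_sum, map_smul]

theorem sum_bilin_self_eq {κ : Type*} [Fintype κ] (b : OrthonormalBasis ι ℝ V)
    (c : OrthonormalBasis κ ℝ V) (B : V →ₗ[ℝ] V →ₗ[ℝ] M) :
    ∑ i, B (b i) (b i) = ∑ j, B (c j) (c j) := by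
  have : FiniteDimensional ℝ V := b.toBasis.finiteDimensional_of_finite
  have h : ∑ i, b i ⊗ₜ[ℝ] b i = ∑ j, c j ⊗ₜ[ℝ] c j := by
    rw [← InnerProductSpace.canonicalCovariantTensor_eq_sum V b,
      InnerProductSpace.canonicalCovariantTensor_eq_sum V c]
  simpa only [map_sum, TensorProduct.lift.tmul] using congrArg (TensorProduct.lift B) h

theorem sum_bilin_self_eq_add {κ μ : Type*} [Fintype κ] [Fintype μ] (b : OrthonormalBasis ι ℝ V)
    {e : κ → V} {f : μ → V} (he : Orthonormal ℝ e) (hf : Orthonormal ℝ f)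
    (hef : ∀ j i, ⟪e i, f j⟫_ℝ = 0)
    (hspan : ∀ v : V, (∀ i, ⟪e i, v⟫_ℝ = 0) → v ∈ Submodule.span ℝ (Set.range f))
    (B : V →ₗ[ℝ] V →ₗ[ℝ] M) :
    ∑ i, B (b i) (b i) = ∑ i, B (e i) (e i) + ∑ j, B (f j) (f j) := by
  obtain ⟨c, hc⟩ := exists_orthonormalBasis_coe_eq_sumElim he hf hef hspan
  rw [sum_bilin_self_eq b c B, hc]
  exact Fintype.sum_sum_type _

end BilinearSum

namespace IsCliffordAction

variable {cl : V →ₗ[ℝ] Module.End ℝ W} (hcl : IsCliffordAction cl)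
include hcl

theorem mul_eq_neg_mul {v w : V} (h : ⟪v, w⟫_ℝ = 0) : cl v * cl w = -(cl w * cl v) := by
  refine eq_neg_of_add_eq_zero_left ?_
  rw [hcl, h, mul_zero, neg_zero, zero_smul]

theorem lie_mul_s3 (x y v : V) :
    ⁅cl x * cl y, cl v⁆ = (2 * ⟪x, v⟫_ℝ) • cl y - (2 * ⟪y, v⟫_ℝ) • cl x :=
  calc ⁅cl x * cl y, cl v⁆
      = cl x * (cl y * cl v + cl v * cl y) - (cl x * cl v + cl v * cl x) * cl y := by
        rw [Ring.lie_def]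
        noncomm_ring
    _ = (2 * ⟪x, v⟫_ℝ) • cl y - (2 * ⟪y, v⟫_ℝ) • cl x := by
        rw [hcl, hcl, mul_smul_comm, smul_mul_assoc, mul_one, one_mul]
        module

end IsCliffordAction

section SpinAction

variable {ι : Type*} [Fintype ι] (b : OrthonormalBasis ι ℝ V) (cl : V →ₗ[ℝ] Module.End ℝ W)

/-- The differential of the spin representation, `α ↦ ¼ ∑ₛ eₛ · α(eₛ)`. It is a Lie
algebra representation on the skew endomorphisms, and is extended linearly to all of them. -/
def spinAction : Module.End ℝ V →ₗ[ℝ] Module.End ℝ W where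
  toFun α := (1 / 4 : ℝ) • ∑ i, cl (b i) * cl (α (b i))
  map_add' α β := by
    simp only [LinearMap.add_apply, map_add, mul_add, Finset.sum_add_distrib, smul_add]
  map_smul' t α := by
    simp only [LinearMap.smul_apply, map_smul, mul_smul_comm, ← Finset.smul_sum, RingHom.id_apply,
      smul_comm t]

theorem spinAction_apply (α : Module.End ℝ V) :
    spinAction b cl α = (1 / 4 : ℝ) • ∑ i, cl (b i) * cl (α (b i)) := rfl

theorem sum_cl_mul_cl_apply (α : Module.End ℝ V) :
    ∑ i, cl (b i) * cl (α (b i)) = (4 : ℝ) • spinAction b cl α := by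
  rw [spinAction_apply]
  module

theorem spinAction_smulRight (x y : V) :
    spinAction b cl ((innerₗ V y).smulRight x) = (1 / 4 : ℝ) • (cl y * cl x) := by
  rw [spinAction_apply]
  conv_rhs => rw [← b.sum_repr' y]
  simp only [LinearMap.smulRight_apply, innerₗ_apply_apply, real_inner_comm, map_smul, map_sum,
    mul_smul_comm, smul_mul_assoc, Finset.sum_mul]

variable {cl}

theorem sum_cl_apply_mul_cl_apply {α : Module.End ℝ V} (hα : ∀ X Y : V, ⟪α X, Y⟫_ℝ = -⟪X, α Y⟫_ℝ)
    (β : Module.End ℝ V) :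
    ∑ i, cl (α (b i)) * cl (β (b i)) = (-4 : ℝ) • spinAction b cl (β * α) := by
  have h := sum_bilin_adjoint_left b ((LinearMap.mul ℝ (Module.End ℝ W)).compl₁₂ cl (cl ∘ₗ β))
    (α := α) (β := -α) fun X Y => by rw [hα, LinearMap.neg_apply, inner_neg_right]
  simp only [LinearMap.compl₁₂_apply, LinearMap.mul_apply', LinearMap.comp_apply,
    LinearMap.neg_apply, map_neg, Finset.sum_neg_distrib] at h
  rw [h, neg_smul, ← sum_cl_mul_cl_apply]
  rfl

theorem lie_spinAction_cl (hcl : IsCliffordAction cl) {α : Module.End ℝ V}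
    (hα : ∀ X Y : V, ⟪α X, Y⟫_ℝ = -⟪X, α Y⟫_ℝ) (v : V) :
    ⁅spinAction b cl α, cl v⁆ = cl (α v) := by
  have hleft : ∑ i, ⟪b i, v⟫_ℝ • cl (α (b i)) = cl (α v) := by
    conv_rhs => rw [← b.sum_repr' v]
    simp only [map_sum, map_smul]
  have hright : ∑ i, ⟪α (b i), v⟫_ℝ • cl (b i) = -cl (α v) := by
    conv_rhs => rw [← b.sum_repr' (α v)]
    simp only [hα, neg_smul, Finset.sum_neg_distrib, map_sum, map_smul]
  calc ⁅spinAction b cl α, cl v⁆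
      = (1 / 4 : ℝ) • ∑ i, ⁅cl (b i) * cl (α (b i)), cl v⁆ := by
        simp only [spinAction_apply, Ring.lie_def, smul_mul_assoc, mul_smul_comm, ← smul_sub,
          Finset.sum_mul, Finset.mul_sum, Finset.sum_sub_distrib]
    _ = (1 / 4 : ℝ) • ((2 : ℝ) • cl (α v) - (2 : ℝ) • -cl (α v)) := by
        simp only [hcl.lie_mul_s3, Finset.sum_sub_distrib, mul_smul, ← Finset.smul_sum, hleft, hright]
    _ = cl (α v) := by module

theorem lie_spinAction (hcl : IsCliffordAction cl) {α : Module.End ℝ V}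
    (hα : ∀ X Y : V, ⟪α X, Y⟫_ℝ = -⟪X, α Y⟫_ℝ) (β : Module.End ℝ V) :
    ⁅spinAction b cl α, spinAction b cl β⁆ = spinAction b cl ⁅α, β⁆ := by
  have hleibniz (x y : V) : ⁅spinAction b cl α, cl x * cl y⁆ =
      cl (α x) * cl y + cl x * cl (α y) := by
    rw [← lie_spinAction_cl b hcl hα x, ← lie_spinAction_cl b hcl hα y]
    simp only [Ring.lie_def]
    noncomm_ring
  calc ⁅spinAction b cl α, spinAction b cl β⁆
      = (1 / 4 : ℝ) • ∑ i, ⁅spinAction b cl α, cl (b i) * cl (β (b i))⁆ := by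
        rw [spinAction_apply b cl β]
        simp only [Ring.lie_def, smul_mul_assoc, mul_smul_comm, ← smul_sub,
          Finset.sum_mul, Finset.mul_sum, Finset.sum_sub_distrib]
    _ = (1 / 4 : ℝ) • ((-4 : ℝ) • spinAction b cl (β * α) +
          (4 : ℝ) • spinAction b cl (α * β)) := by
        simp only [hleibniz, Finset.sum_add_distrib, sum_cl_apply_mul_cl_apply b hα,
          ← sum_cl_mul_cl_apply, Module.End.mul_apply]
    _ = spinAction b cl ⁅α, β⁆ := by
        rw [Ring.lie_def, map_sub]
        module

theorem formAct_inner_eq_spinAction {m : ℕ} (b : OrthonormalBasis (Fin m) ℝ V)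
    (hcl : IsCliffordAction cl) {α : Module.End ℝ V}
    (hα : ∀ X Y : V, ⟪α X, Y⟫_ℝ = -⟪X, α Y⟫_ℝ) (ψ : W) :
    formAct b cl (fun X Y => ⟪X, α Y⟫_ℝ) ψ = (-2 : ℝ) • spinAction b cl α ψ := by
  have hskew (X Y : V) : ⟪X, α Y⟫_ℝ = -⟪Y, α X⟫_ℝ := by rw [real_inner_comm, hα]
  have hsymm (i j : Fin m) : ⟪b i, α (b j)⟫_ℝ • cl (b i) (cl (b j) ψ) =
      ⟪b j, α (b i)⟫_ℝ • cl (b j) (cl (b i) ψ) := by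
    obtain rfl | hij := eq_or_ne i j
    · rfl
    · have hanti := LinearMap.congr_fun (hcl.mul_eq_neg_mul (b.orthonormal.2 hij)) ψ
      simp only [Module.End.mul_apply, LinearMap.neg_apply] at hanti
      rw [hskew, hanti, smul_neg, neg_smul, neg_neg]
  have hdiag (i : Fin m) : ⟪b i, α (b i)⟫_ℝ • cl (b i) (cl (b i) ψ) = 0 := by
    rw [self_eq_neg.1 (hskew (b i) (b i)), zero_smul]
  have hexpand (j : Fin m) : ∑ i, ⟪b i, α (b j)⟫_ℝ • cl (b i) (cl (b j) ψ) =
      cl (α (b j)) (cl (b j) ψ) := by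
    conv_rhs => rw [← b.sum_repr' (α (b j))]
    simp only [map_sum, map_smul, LinearMap.sum_apply, LinearMap.smul_apply]
  have htwo : (2 : ℝ) • formAct b cl (fun X Y => ⟪X, α Y⟫_ℝ) ψ =
      (-4 : ℝ) • spinAction b cl α ψ :=
    calc (2 : ℝ) • formAct b cl (fun X Y => ⟪X, α Y⟫_ℝ) ψ
        = ∑ i, ∑ j, ⟪b i, α (b j)⟫_ℝ • cl (b i) (cl (b j) ψ) := by
          rw [two_smul, formAct, sum_sum_if_lt_add_self hsymm hdiag]
      _ = ∑ j, cl (α (b j)) (cl (b j) ψ) := by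
          rw [Finset.sum_comm]
          simp only [hexpand]
      _ = (-4 : ℝ) • spinAction b cl α ψ := by
          simpa using LinearMap.congr_fun (sum_cl_apply_mul_cl_apply (cl := cl) b hα 1) ψ
  linear_combination (norm := module) (1 / 2 : ℝ) • htwo

end SpinAction

namespace AlmostThreeContact

variable (D : AlmostThreeContact V) (p : Fin 3)

theorem orthonormal_xi : Orthonormal ℝ D.xi :=
  orthonormal_iff_ite.2 D.xi_orthonormal

theorem phi_mul_phi_add_one :
    D.phi p * D.phi (p + 1) =
      D.phi (p + 2) + (innerₗ V (D.xi (p + 1))).smulRight (D.xi p) := by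
  ext X
  have h := D.phi_comp (p + 2) X
  simp only [add_assoc, Fin.reduceAdd, add_zero] at h
  simp [h]

theorem phi_add_one_mul_phi :
    D.phi (p + 1) * D.phi p =
      -D.phi (p + 2) + (innerₗ V (D.xi p)).smulRight (D.xi (p + 1)) := by
  ext X
  have h := D.phi_comp' (p + 2) X
  simp only [add_assoc, Fin.reduceAdd, add_zero] at h
  simp [h]

theorem lie_phi_phi_add_one :
    ⁅D.phi p, D.phi (p + 1)⁆ = (2 : ℝ) • D.phi (p + 2) +
      (innerₗ V (D.xi (p + 1))).smulRight (D.xi p) -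
      (innerₗ V (D.xi p)).smulRight (D.xi (p + 1)) := by
  rw [Ring.lie_def, phi_mul_phi_add_one, phi_add_one_mul_phi]
  module

variable {cl : V →ₗ[ℝ] Module.End ℝ W}

theorem cl_xi_add_one_mul_cl_xi (hcl : IsCliffordAction cl) :
    cl (D.xi (p + 1)) * cl (D.xi p) = -(cl (D.xi p) * cl (D.xi (p + 1))) :=
  hcl.mul_eq_neg_mul (D.orthonormal_xi.2 (by simp))

theorem sum_cl_phi_xi_mul_cl_phi_xi (hcl : IsCliffordAction cl) :
    ∑ i, cl (D.phi p (D.xi i)) * cl (D.phi (p + 1) (D.xi i)) =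
      cl (D.xi p) * cl (D.xi (p + 1)) := by
  have hp : D.phi p (D.xi (p + 2)) = -D.xi (p + 1) := by
    simpa [add_assoc] using D.phi_xi' (p + 2)
  have hq : D.phi (p + 1) (D.xi (p + 2)) = D.xi p := by
    simpa [add_assoc] using D.phi_xi (p + 1)
  have hcyclic (g : Fin 3 → Module.End ℝ W) : ∑ i, g i = g p + g (p + 1) + g (p + 2) := by
    rw [← Equiv.sum_comp (Equiv.addLeft p), Fin.sum_univ_three]
    simp
  rw [hcyclic, D.phi_xi_self, D.phi_xi_self, hp, hq]
  simp [D.cl_xi_add_one_mul_cl_xi p hcl]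

variable {ι : Type*} [Fintype ι] (b : OrthonormalBasis ι ℝ V)

theorem lie_spinAction_phi (hcl : IsCliffordAction cl) :
    ⁅spinAction b cl (D.phi p), spinAction b cl (D.phi (p + 1))⁆ =
      (2 : ℝ) • spinAction b cl (D.phi (p + 2)) -
        (1 / 2 : ℝ) • (cl (D.xi p) * cl (D.xi (p + 1))) := by
  rw [lie_spinAction b hcl (D.phi_skew p), lie_phi_phi_add_one, map_sub, map_add, map_smul,
    spinAction_smulRight, spinAction_smulRight, D.cl_xi_add_one_mul_cl_xi p hcl]
  module

theorem sum_horizontal_cl_phi_mul_cl_phi (hcl : IsCliffordAction cl) {κ : Type*} [Fintype κ]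
    {f : κ → V} (hf : Orthonormal ℝ f) (hf_horiz : ∀ s i, ⟪D.xi i, f s⟫_ℝ = 0)
    (hf_span : ∀ v : V, (∀ i, ⟪D.xi i, v⟫_ℝ = 0) → v ∈ Submodule.span ℝ (Set.range f)) :
    ∑ s, cl (D.phi p (f s)) * cl (D.phi (p + 1) (f s)) =
      (4 : ℝ) • spinAction b cl (D.phi (p + 2)) -
        (2 : ℝ) • (cl (D.xi p) * cl (D.xi (p + 1))) := by
  have hsplit := sum_bilin_self_eq_add b D.orthonormal_xi hf hf_horiz hf_span
    ((LinearMap.mul ℝ (Module.End ℝ W)).compl₁₂ (cl ∘ₗ D.phi p) (cl ∘ₗ D.phi (p + 1)))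
  simp only [LinearMap.compl₁₂_apply, LinearMap.mul_apply', LinearMap.comp_apply] at hsplit
  rw [sum_cl_apply_mul_cl_apply b (D.phi_skew p), D.sum_cl_phi_xi_mul_cl_phi_xi p hcl,
    phi_add_one_mul_phi, map_add, map_neg, spinAction_smulRight] at hsplit
  rw [eq_sub_of_add_eq' hsplit.symm]
  module

end AlmostThreeContact

/-- For `(p,q,r)` an even permutation of `(1,2,3)` (encoded as
`(p, p+1, p+2)`) and `f_1,…,f_{4n-4}` an orthonormal basis of the horizontal
space `H = ker η_1 ∩ ker η_2 ∩ ker η_3`, for every `ψ ∈ W`: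
`Φ_p·(Φ_q·ψ) - Φ_q·(Φ_p·ψ) = -2Φ_r·ψ + Σ_s φ_p(f_s)·(φ_q(f_s)·ψ)`. -/
theorem statement_3 {n : ℕ} (hn : 1 ≤ n)
    (D : AlmostThreeContact V) (b : OrthonormalBasis (Fin (4 * n - 1)) ℝ V)
    (cl : V →ₗ[ℝ] Module.End ℝ W) (hcl : IsCliffordAction cl)
    (f : Fin (4 * n - 4) → V) (hf_on : Orthonormal ℝ f)
    (hf_horiz : ∀ (s : Fin (4 * n - 4)) (i : Fin 3), ⟪D.xi i, f s⟫_ℝ = 0)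
    (hf_span : ∀ v : V, (∀ i : Fin 3, ⟪D.xi i, v⟫_ℝ = 0) →
      v ∈ Submodule.span ℝ (Set.range f))
    (p : Fin 3) (ψ : W) :
    formAct b cl (Phi D p) (formAct b cl (Phi D (p + 1)) ψ)
      - formAct b cl (Phi D (p + 1)) (formAct b cl (Phi D p) ψ)
    = (-2 : ℝ) • formAct b cl (Phi D (p + 2)) ψ
      + ∑ s : Fin (4 * n - 4), cl (D.phi p (f s)) (cl (D.phi (p + 1) (f s)) ψ) := by
  have hform (i : Fin 3) (χ : W) :
      formAct b cl (Phi D i) χ = (-2 : ℝ) • spinAction b cl (D.phi i) χ :=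
    formAct_inner_eq_spinAction b hcl (D.phi_skew i) χ
  have hlie := LinearMap.congr_fun (D.lie_spinAction_phi p b hcl) ψ
  have hsum := LinearMap.congr_fun
    (D.sum_horizontal_cl_phi_mul_cl_phi p b hcl hf_on hf_horiz hf_span) ψ
  simp only [Ring.lie_def, LinearMap.sub_apply, LinearMap.smul_apply, LinearMap.sum_apply,
    Module.End.mul_apply] at hlie hsum
  simp only [hform, map_smul, hsum]
  linear_combination (norm := module) (4 : ℝ) • hlie
end
end

section
/- For extended symmetric data: U(x_1,x_2) ∈ 𝔨 for all x_1, x_2 ∈ 𝔨; U(x,y) ∈ 𝔤_1 for all x ∈ 𝔨 and y ∈ 𝔤_1; and U(y_1,y_2) ∈ 𝔨 for all y_1, y_2 ∈ 𝔤_1. -/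
noncomputable section

/- Context: *extended symmetric data* consists of a finite-dimensional real
semisimple Lie algebra `𝔤` with a `ℤ₂`-grading `𝔤 = 𝔤₀ ⊕ 𝔤₁`, a decomposition
`𝔤₀ = 𝔥 ⊕ 𝔨` into commuting Lie subalgebras, and nonzero reals `λ₀, λ₁` such
that `g := λ₀ κ|𝔨 ⊥ λ₁ κ|𝔤₁` is positive definite on `𝔪 := 𝔨 ⊕ 𝔤₁` (`κ` the
Killing form).  `proj_𝔪` is the projection `𝔤 = 𝔥 ⊕ 𝔪 → 𝔪` along `𝔥`, `U` is
the symmetric bilinear map determined by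
`2g(U(X,Y),Z) = g(proj_𝔪[Z,X],Y) + g(X,proj_𝔪[Z,Y])`, and the Nomizu map is
`Λ(X)Y = ½ proj_𝔪[X,Y] + U(X,Y)`. -/

/-- Extended symmetric data on a real Lie algebra `L` (semisimplicity and finite
dimensionality are imposed as typeclass assumptions in the theorems). -/
structure ExtSymData (L : Type*) [LieRing L] [LieAlgebra ℝ L] where
  /-- the subalgebra `𝔥` -/
  H : Submodule ℝ L
  /-- the subalgebra `𝔨` -/
  K : Submodule ℝ L
  /-- the odd part `𝔤₁` of the grading -/
  G1 : Submodule ℝ L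
  lam0 : ℝ
  lam1 : ℝ
  lam0_ne : lam0 ≠ 0
  lam1_ne : lam1 ≠ 0
  /-- `𝔥 ⊕ 𝔨` is a direct sum -/
  hHK_inf : H ⊓ K = ⊥
  /-- `𝔤₀ ⊕ 𝔤₁` is a direct sum -/
  hG0_inf : (H ⊔ K) ⊓ G1 = ⊥
  /-- `𝔤 = 𝔥 ⊕ 𝔨 ⊕ 𝔤₁` -/
  h_top : H ⊔ K ⊔ G1 = ⊤
  /-- `𝔥` is a Lie subalgebra -/
  hH_sub : ∀ a ∈ H, ∀ b ∈ H, ⁅a, b⁆ ∈ H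
  /-- `𝔨` is a Lie subalgebra -/
  hK_sub : ∀ a ∈ K, ∀ b ∈ K, ⁅a, b⁆ ∈ K
  /-- `[𝔥, 𝔨] = 0` -/
  hHK_comm : ∀ a ∈ H, ∀ b ∈ K, ⁅a, b⁆ = (0 : L)
  /-- `[𝔤₀, 𝔤₁] ⊆ 𝔤₁` -/
  hG0G1 : ∀ a ∈ H ⊔ K, ∀ b ∈ G1, ⁅a, b⁆ ∈ G1
  /-- `[𝔤₁, 𝔤₁] ⊆ 𝔤₀` -/
  hG1G1 : ∀ a ∈ G1, ∀ b ∈ G1, ⁅a, b⁆ ∈ H ⊔ K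
  /-- the metric `g` -/
  gform : L →ₗ[ℝ] L →ₗ[ℝ] ℝ
  gform_K : ∀ x ∈ K, ∀ x' ∈ K, gform x x' = lam0 * killingForm ℝ L x x'
  gform_G1 : ∀ y ∈ G1, ∀ y' ∈ G1, gform y y' = lam1 * killingForm ℝ L y y'
  gform_KG1 : ∀ x ∈ K, ∀ y ∈ G1, gform x y = 0
  gform_G1K : ∀ x ∈ K, ∀ y ∈ G1, gform y x = 0
  /-- `g` is positive definite on `𝔪 = 𝔨 ⊕ 𝔤₁` -/
  gform_posdef : ∀ v ∈ K ⊔ G1, v ≠ 0 → 0 < gform v v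
  /-- the projection `proj_𝔪 : 𝔤 = 𝔥 ⊕ 𝔪 → 𝔪` along `𝔥` -/
  projm : L →ₗ[ℝ] L
  projm_H : ∀ h ∈ H, projm h = 0
  projm_m : ∀ m ∈ K ⊔ G1, projm m = m
  /-- the symmetric bilinear map `U` -/
  Ubil : L →ₗ[ℝ] L →ₗ[ℝ] L
  Ubil_symm : ∀ X Y : L, Ubil X Y = Ubil Y X
  Ubil_mem : ∀ X ∈ K ⊔ G1, ∀ Y ∈ K ⊔ G1, Ubil X Y ∈ K ⊔ G1
  Ubil_def : ∀ X ∈ K ⊔ G1, ∀ Y ∈ K ⊔ G1, ∀ Z ∈ K ⊔ G1,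
    2 * gform (Ubil X Y) Z = gform (projm ⁅Z, X⁆) Y + gform X (projm ⁅Z, Y⁆)

variable {L : Type*} [LieRing L] [LieAlgebra ℝ L]

/-- The Nomizu map `Λ(X)Y = ½ proj_𝔪 ⁅X,Y⁆ + U(X,Y)` of the Levi-Civita
connection. -/
def nomizu (D : ExtSymData L) (X Y : L) : L :=
  (2⁻¹ : ℝ) • D.projm ⁅X, Y⁆ + D.Ubil X Y

/- The two summands of `𝔪 = 𝔨 ⊕ 𝔤₁` are orthogonal for `g`, and the bracket `proj_𝔪 ⁅·,·⁆` is graded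
by `ℤ/2` with `𝔨` in degree `0` and `𝔤₁` in degree `1`. For homogeneous `X, Y, Z` the right-hand
side of `2g(U(X,Y),Z) = g(proj_𝔪[Z,X],Y) + g(X,proj_𝔪[Z,Y])` therefore vanishes unless the degrees
add up to zero, so `U(X,Y)` is orthogonal to the summand of the wrong degree. As `g` is definite,
the component of `U(X,Y)` in that summand is zero. -/

section GradedBracket

variable {ι R V : Type*} [CommSemiring R] [AddCommMonoid V] [Module R V]
  {g : V →ₗ[R] V →ₗ[R] R}

theorem mem_biSup_of_orthogonal {M : ι → Submodule R V}
    (orthogonal : Pairwise fun i j ↦ ∀ x ∈ M i, ∀ y ∈ M j, g x y = 0)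
    (anisotropic : ∀ i, ∀ x ∈ M i, g x x = 0 → x = 0)
    {S : Set ι} {u : V} (hu : u ∈ ⨆ i, M i) (hS : ∀ k ∉ S, ∀ z ∈ M k, g u z = 0) :
    u ∈ ⨆ k ∈ S, M k := by
  obtain ⟨f, hf, rfl⟩ := (Submodule.mem_iSup_iff_exists_finsupp M u).1 hu
  have pairing_component (k : ι) : g (f.sum fun _ x ↦ x) (f k) = g (f k) (f k) := by
    rw [Finsupp.sum, map_sum, LinearMap.sum_apply]
    refine Finset.sum_eq_single k (fun i _ hik ↦ orthogonal hik _ (hf i) _ (hf k)) fun hk ↦ ?_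
    rw [Finsupp.notMem_support_iff.1 hk, map_zero]
  have component_eq_zero (k : ι) (hk : k ∉ S) : f k = 0 :=
    anisotropic k _ (hf k) ((pairing_component k).symm.trans (hS k hk _ (hf k)))
  refine Submodule.sum_mem _ fun k hk ↦ ?_
  have hkS : k ∈ S := by_contra fun hkS ↦ Finsupp.mem_support_iff.1 hk (component_eq_zero k hkS)
  exact Submodule.mem_iSup_of_mem k (Submodule.mem_iSup_of_mem hkS (hf k))

-- `u` stands for `U(X,Y)`, formed with the bracket `b`.
theorem mem_sup_of_two_mul_eq_add_of_graded {A : Type*} [AddCommGroup A] [NoZeroDivisors R]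
    [NeZero (2 : R)] {M : A → Submodule R V} {b : V → V → V}
    (orthogonal : Pairwise fun i j ↦ ∀ x ∈ M i, ∀ y ∈ M j, g x y = 0)
    (anisotropic : ∀ i, ∀ x ∈ M i, g x x = 0 → x = 0)
    (graded : ∀ i j, ∀ x ∈ M i, ∀ y ∈ M j, b x y ∈ M (i + j))
    {i j : A} {X Y u : V} (hX : X ∈ M i) (hY : Y ∈ M j) (hu : u ∈ ⨆ k, M k)
    (two_mul_eq : ∀ k, ∀ Z ∈ M k, 2 * g u Z = g (b Z X) Y + g X (b Z Y)) :
    u ∈ M (j - i) ⊔ M (i - j) := by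
  rw [← iSup_pair]
  refine mem_biSup_of_orthogonal orthogonal anisotropic hu fun k hk Z hZ ↦ ?_
  obtain ⟨hji, hij⟩ : k ≠ j - i ∧ k ≠ i - j := by simpa using hk
  have left_eq_zero : g (b Z X) Y = 0 :=
    orthogonal (mt eq_sub_of_add_eq hji) _ (graded k i Z hZ X hX) Y hY
  have right_eq_zero : g X (b Z Y) = 0 :=
    orthogonal (mt (fun h ↦ eq_sub_of_add_eq h.symm) hij) X hX _ (graded k j Z hZ Y hY)
  have two_mul_eq_zero : 2 * g u Z = 0 := by
    rw [two_mul_eq k Z hZ, left_eq_zero, right_eq_zero, add_zero]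
  exact (mul_eq_zero.1 two_mul_eq_zero).resolve_left two_ne_zero

end GradedBracket

namespace ExtSymData

variable (D : ExtSymData L)

/-- The `ℤ/2`-grading of `𝔪`, with `𝔨` in degree `0` and `𝔤₁` in degree `1`, for which the bracket
`proj_𝔪 ⁅·,·⁆` is graded. -/
def gradedPart : ZMod 2 → Submodule ℝ L := ![D.K, D.G1]

theorem gradedPart_le (i : ZMod 2) : D.gradedPart i ≤ D.K ⊔ D.G1 := by
  fin_cases i
  · exact le_sup_left
  · exact le_sup_right

theorem sup_le_iSup_gradedPart : D.K ⊔ D.G1 ≤ ⨆ i, D.gradedPart i :=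
  sup_le (le_iSup D.gradedPart 0) (le_iSup D.gradedPart 1)

theorem gform_gradedPart_eq_zero :
    Pairwise fun i j ↦ ∀ x ∈ D.gradedPart i, ∀ y ∈ D.gradedPart j, D.gform x y = 0 := by
  intro i j hij x hx y hy
  fin_cases i <;> fin_cases j
  · exact absurd rfl hij
  · exact D.gform_KG1 x hx y hy
  · exact D.gform_G1K y hy x hx
  · exact absurd rfl hij

theorem eq_zero_of_gform_self_eq_zero {v : L} (hv : v ∈ D.K ⊔ D.G1) (h : D.gform v v = 0) :
    v = 0 :=
  by_contra fun hv0 ↦ (D.gform_posdef v hv hv0).ne' h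

theorem projm_mem_K {a : L} (ha : a ∈ D.H ⊔ D.K) : D.projm a ∈ D.K := by
  obtain ⟨h, hh, k, hk, rfl⟩ := Submodule.mem_sup.1 ha
  rwa [map_add, D.projm_H h hh, zero_add, D.projm_m k (Submodule.mem_sup_left hk)]

theorem projm_mem_G1 {y : L} (hy : y ∈ D.G1) : D.projm y ∈ D.G1 := by
  rwa [D.projm_m y (Submodule.mem_sup_right hy)]

theorem projm_lie_mem_gradedPart (i j : ZMod 2) :
    ∀ x ∈ D.gradedPart i, ∀ y ∈ D.gradedPart j, D.projm ⁅x, y⁆ ∈ D.gradedPart (i + j) := by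
  intro x hx y hy
  fin_cases i <;> fin_cases j
  · exact D.projm_mem_K (Submodule.mem_sup_right (D.hK_sub x hx y hy))
  · exact D.projm_mem_G1 (D.hG0G1 x (Submodule.mem_sup_right hx) y hy)
  · rw [← lie_skew, map_neg]
    exact D.G1.neg_mem (D.projm_mem_G1 (D.hG0G1 y (Submodule.mem_sup_right hy) x hx))
  · exact D.projm_mem_K (D.hG1G1 x hx y hy)

theorem Ubil_mem_gradedPart (i j : ZMod 2) :
    ∀ X ∈ D.gradedPart i, ∀ Y ∈ D.gradedPart j, D.Ubil X Y ∈ D.gradedPart (i + j) := by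
  intro X hX Y hY
  have hXm := D.gradedPart_le i hX
  have hYm := D.gradedPart_le j hY
  have mem_sup : D.Ubil X Y ∈ D.gradedPart (j - i) ⊔ D.gradedPart (i - j) :=
    mem_sup_of_two_mul_eq_add_of_graded D.gform_gradedPart_eq_zero
      (fun k _ hv ↦ D.eq_zero_of_gform_self_eq_zero (D.gradedPart_le k hv))
      D.projm_lie_mem_gradedPart hX hY (D.sup_le_iSup_gradedPart (D.Ubil_mem X hXm Y hYm))
      fun k Z hZ ↦ D.Ubil_def X hXm Y hYm Z (D.gradedPart_le k hZ)
  rwa [CharTwo.sub_eq_add, CharTwo.sub_eq_add, add_comm j i, sup_idem] at mem_sup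

end ExtSymData

theorem statement_7_general [FiniteDimensional ℝ L] (D : ExtSymData L) :
    (∀ x₁ ∈ D.K, ∀ x₂ ∈ D.K, D.Ubil x₁ x₂ ∈ D.K) ∧
    (∀ x ∈ D.K, ∀ y ∈ D.G1, D.Ubil x y ∈ D.G1) ∧
    (∀ y₁ ∈ D.G1, ∀ y₂ ∈ D.G1, D.Ubil y₁ y₂ ∈ D.K) :=
  ⟨D.Ubil_mem_gradedPart 0 0, D.Ubil_mem_gradedPart 0 1, D.Ubil_mem_gradedPart 1 1⟩

/-- For extended symmetric data: `U(𝔨,𝔨) ⊆ 𝔨`,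
`U(𝔨,𝔤₁) ⊆ 𝔤₁`, and `U(𝔤₁,𝔤₁) ⊆ 𝔨`. -/
theorem statement_7 [FiniteDimensional ℝ L] [LieAlgebra.IsSemisimple ℝ L]
    (D : ExtSymData L) :
    (∀ x₁ ∈ D.K, ∀ x₂ ∈ D.K, D.Ubil x₁ x₂ ∈ D.K) ∧
    (∀ x ∈ D.K, ∀ y ∈ D.G1, D.Ubil x y ∈ D.G1) ∧
    (∀ y₁ ∈ D.G1, ∀ y₂ ∈ D.G1, D.Ubil y₁ y₂ ∈ D.K) :=
  statement_7_general D
end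
end

section
/- For extended symmetric data: (a) for every x ∈ 𝔨 the operator ad(x) maps 𝔪 into 𝔪 and its restriction to 𝔪 belongs to so(𝔪)_0; (b) for every y ∈ 𝔤_1 the operator proj_𝔪 ∘ ad(y), restricted to 𝔪, maps 𝔨 into 𝔤_1 and 𝔤_1 into 𝔨; (c) Λ(x) ∈ so(𝔪)_0 for every x ∈ 𝔨; (d) Λ(y) ∈ so(𝔪)_1 for every y ∈ 𝔤_1. -/
noncomputable section

variable {L : Type*} [LieRing L] [LieAlgebra ℝ L]

/-! Give `𝔪 = 𝔨 ⊕ 𝔤₁` the `ℤ/2`-grading with even part `𝔨` and odd part `𝔤₁`. It is orthogonal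
for `g`, and the bracket `proj_𝔪 ⁅·, ·⁆` adds degrees. In the equation defining `U(X, Y)` the
right-hand side vanishes when `Z` has degree other than `deg X + deg Y`, so by definiteness of `g`
also `U`, and with it `Λ`, adds degrees. The operator `ad(x)`, `x ∈ 𝔨`, preserves `𝔨` and `𝔤₁`, on
each of which `g` is a multiple of the invariant Killing form; `Λ(X)` is skew because the Koszul
formula for `2 g(Λ(X)Y, Z)` is antisymmetric in `Y` and `Z`. -/

lemma mem_left_of_mem_sup_of_orthogonal {R V W : Type*} [CommRing R] [AddCommGroup V] [Module R V]
    [AddCommGroup W] [Module R W] (B : V →ₗ[R] V →ₗ[R] W) {P Q : Submodule R V}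
    (hPQ : ∀ p ∈ P, ∀ q ∈ Q, B p q = 0) (hQ : ∀ q ∈ Q, B q q = 0 → q = 0)
    {v : V} (hv : v ∈ P ⊔ Q) (hvQ : ∀ q ∈ Q, B v q = 0) : v ∈ P := by
  obtain ⟨p, hp, q, hq, rfl⟩ := Submodule.mem_sup.1 hv
  have hqq : B q q = 0 := by
    simpa only [map_add, LinearMap.add_apply, hPQ p hp q hq, zero_add] using hvQ q hq
  rwa [hQ q hq hqq, add_zero]

namespace ExtSymData

/-- The `ℤ/2`-grading of `𝔪`, with even part `𝔨` and odd part `𝔤₁`. -/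
def mPart (D : ExtSymData L) : ZMod 2 → Submodule ℝ L :=
  ![D.K, D.G1]

/-- The condition that `A` restricts to an element of `so(𝔪)ᵢ`: a `g`-skew endomorphism of `𝔪`
which is homogeneous of degree `i`. The values of `A` outside `𝔪` are irrelevant. -/
def IsHomogeneousSkew (D : ExtSymData L) (i : ZMod 2) (A : Module.End ℝ L) : Prop :=
  (∀ x ∈ D.K, A x ∈ D.mPart i) ∧
  (∀ y ∈ D.G1, A y ∈ D.mPart (i + 1)) ∧
  (∀ m ∈ D.K ⊔ D.G1, ∀ m' ∈ D.K ⊔ D.G1, D.gform (A m) m' + D.gform m (A m') = 0)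

/-- The Nomizu map `Λ(X)` as a linear endomorphism of the whole Lie algebra, where `projm` and
`Ubil` are defined; the operator on `𝔪` is its restriction. -/
def nomizuEnd (D : ExtSymData L) (X : L) : Module.End ℝ L :=
  (2⁻¹ : ℝ) • (D.projm ∘ₗ LieAlgebra.ad ℝ L X) + D.Ubil X

variable (D : ExtSymData L) {i j : ZMod 2} {x y m m' X Y Z : L}

lemma mPart_sup_mPart_add_one (i : ZMod 2) : D.mPart i ⊔ D.mPart (i + 1) = D.K ⊔ D.G1 := by
  match i with
  | 0 => rfl
  | 1 => exact sup_comm _ _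

lemma mPart_le (i : ZMod 2) : D.mPart i ≤ D.K ⊔ D.G1 :=
  D.mPart_sup_mPart_add_one i ▸ le_sup_left

lemma eqOn_of_eqOn_mPart {M : Type*} [AddCommGroup M] [Module ℝ M] {f g : L →ₗ[ℝ] M}
    (h : ∀ i, ∀ x ∈ D.mPart i, f x = g x) (hm : m ∈ D.K ⊔ D.G1) : f m = g m :=
  LinearMap.eqOn_sup (h 0) (h 1) hm

lemma bilin_eqOn_of_eqOn_mPart {M : Type*} [AddCommGroup M] [Module ℝ M] {B C : L →ₗ[ℝ] L →ₗ[ℝ] M}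
    (h : ∀ i j, ∀ x ∈ D.mPart i, ∀ y ∈ D.mPart j, B x y = C x y)
    (hm : m ∈ D.K ⊔ D.G1) (hm' : m' ∈ D.K ⊔ D.G1) : B m m' = C m m' :=
  D.eqOn_of_eqOn_mPart (f := B.flip m') (g := C.flip m')
    (fun i x hx ↦ D.eqOn_of_eqOn_mPart (f := B x) (fun j y hy ↦ h i j x hx y hy) hm') hm

lemma gform_eq_zero_of_ne (hx : x ∈ D.mPart i) (hy : y ∈ D.mPart j) (hij : i ≠ j) :
    D.gform x y = 0 := by
  match i, j with
  | 0, 0 | 1, 1 => exact absurd rfl hij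
  | 0, 1 => exact D.gform_KG1 x hx y hy
  | 1, 0 => exact D.gform_G1K y hy x hx

lemma exists_gform_eq_mul_killingForm (i : ZMod 2) :
    ∃ c : ℝ, ∀ x ∈ D.mPart i, ∀ y ∈ D.mPart i, D.gform x y = c * killingForm ℝ L x y := by
  match i with
  | 0 => exact ⟨D.lam0, D.gform_K⟩
  | 1 => exact ⟨D.lam1, D.gform_G1⟩

lemma gform_comm (hm : m ∈ D.K ⊔ D.G1) (hm' : m' ∈ D.K ⊔ D.G1) :
    D.gform m m' = D.gform m' m := by
  refine D.bilin_eqOn_of_eqOn_mPart (C := D.gform.flip) (fun i j x hx y hy ↦ ?_) hm hm'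
  rw [LinearMap.flip_apply]
  rcases eq_or_ne i j with rfl | hij
  · obtain ⟨c, hc⟩ := D.exists_gform_eq_mul_killingForm i
    rw [hc x hx y hy, hc y hy x hx, LieModule.traceForm_comm]
  · rw [D.gform_eq_zero_of_ne hx hy hij, D.gform_eq_zero_of_ne hy hx hij.symm]

lemma mem_mPart_of_gform_eq_zero (hm : m ∈ D.K ⊔ D.G1)
    (h : ∀ z ∈ D.mPart (i + 1), D.gform m z = 0) : m ∈ D.mPart i := by
  have hi : i ≠ i + 1 := (by decide : ∀ i : ZMod 2, i ≠ i + 1) i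
  refine mem_left_of_mem_sup_of_orthogonal D.gform
    (fun p hp q hq ↦ D.gform_eq_zero_of_ne hp hq hi) (fun q hq hqq ↦ ?_)
    (D.mPart_sup_mPart_add_one i ▸ hm) h
  by_contra hq0
  exact (D.gform_posdef q (D.mPart_le _ hq) hq0).ne' hqq

lemma lie_mem_mPart_of_mem_K (hx : x ∈ D.K) (hy : y ∈ D.mPart i) : ⁅x, y⁆ ∈ D.mPart i := by
  match i with
  | 0 => exact D.hK_sub x hx y hy
  | 1 => exact D.hG0G1 x (Submodule.mem_sup_right hx) y hy

lemma gform_lie_add_gform_lie (hx : x ∈ D.K) (hm : m ∈ D.K ⊔ D.G1) (hm' : m' ∈ D.K ⊔ D.G1) :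
    D.gform ⁅x, m⁆ m' + D.gform m ⁅x, m'⁆ = 0 := by
  rw [add_eq_zero_iff_eq_neg]
  refine D.bilin_eqOn_of_eqOn_mPart (B := D.gform ∘ₗ LieAlgebra.ad ℝ L x)
    (C := -D.gform.compl₂ (LieAlgebra.ad ℝ L x)) (fun i j a ha b hb ↦ ?_) hm hm'
  have hxa := D.lie_mem_mPart_of_mem_K hx ha
  have hxb := D.lie_mem_mPart_of_mem_K hx hb
  change D.gform ⁅x, a⁆ b = -D.gform a ⁅x, b⁆
  rcases eq_or_ne i j with rfl | hij
  · obtain ⟨c, hc⟩ := D.exists_gform_eq_mul_killingForm i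
    rw [hc _ hxa b hb, hc a ha _ hxb, LieModule.traceForm_lieInvariant ℝ L L x a b, mul_neg]
  · rw [D.gform_eq_zero_of_ne hxa hb hij, D.gform_eq_zero_of_ne ha hxb hij, neg_zero]

lemma projm_mem (v : L) : D.projm v ∈ D.K ⊔ D.G1 := by
  have hv : v ∈ D.H ⊔ (D.K ⊔ D.G1) := by
    rw [← sup_assoc, D.h_top]
    exact Submodule.mem_top
  obtain ⟨a, ha, b, hb, rfl⟩ := Submodule.mem_sup.1 hv
  rwa [map_add, D.projm_H a ha, D.projm_m b hb, zero_add]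

lemma projm_mem_K_of_mem_sup {v : L} (hv : v ∈ D.H ⊔ D.K) : D.projm v ∈ D.K := by
  obtain ⟨a, ha, b, hb, rfl⟩ := Submodule.mem_sup.1 hv
  rwa [map_add, D.projm_H a ha, D.projm_m b (Submodule.mem_sup_left hb), zero_add]

lemma projm_mem_mPart {v : L} (hv : v ∈ D.mPart i) : D.projm v ∈ D.mPart i := by
  rwa [D.projm_m v (D.mPart_le i hv)]

lemma projm_lie_swap (X Y : L) : D.projm ⁅X, Y⁆ = -D.projm ⁅Y, X⁆ := by
  rw [← lie_skew, map_neg]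

lemma projm_lie_mem (hX : X ∈ D.mPart i) (hY : Y ∈ D.mPart j) :
    D.projm ⁅X, Y⁆ ∈ D.mPart (i + j) := by
  match i, j with
  | 0, j =>
    rw [zero_add]
    exact D.projm_mem_mPart (D.lie_mem_mPart_of_mem_K hX hY)
  | 1, 0 =>
    rw [D.projm_lie_swap]
    exact neg_mem (D.projm_mem_mPart (i := 1) (D.lie_mem_mPart_of_mem_K hY hX))
  | 1, 1 => exact D.projm_mem_K_of_mem_sup (D.hG1G1 X hX Y hY)

lemma Ubil_mem_mPart (hX : X ∈ D.mPart i) (hY : Y ∈ D.mPart j) :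
    D.Ubil X Y ∈ D.mPart (i + j) := by
  obtain ⟨hZXj, hiZY⟩ : i + j + 1 + i ≠ j ∧ i ≠ i + j + 1 + j :=
    (by decide : ∀ i j : ZMod 2, i + j + 1 + i ≠ j ∧ i ≠ i + j + 1 + j) i j
  have hXm := D.mPart_le i hX
  have hYm := D.mPart_le j hY
  refine D.mem_mPart_of_gform_eq_zero (D.Ubil_mem X hXm Y hYm) fun Z hZ ↦ ?_
  have hZX : D.gform (D.projm ⁅Z, X⁆) Y = 0 :=
    D.gform_eq_zero_of_ne (D.projm_lie_mem hZ hX) hY hZXj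
  have hZY : D.gform X (D.projm ⁅Z, Y⁆) = 0 :=
    D.gform_eq_zero_of_ne hX (D.projm_lie_mem hZ hY) hiZY
  linarith [D.Ubil_def X hXm Y hYm Z (D.mPart_le _ hZ)]

lemma nomizu_mem_mPart (hX : X ∈ D.mPart i) (hY : Y ∈ D.mPart j) :
    nomizu D X Y ∈ D.mPart (i + j) :=
  add_mem (Submodule.smul_mem _ _ (D.projm_lie_mem hX hY)) (D.Ubil_mem_mPart hX hY)

lemma nomizu_mem (hX : X ∈ D.K ⊔ D.G1) (hY : Y ∈ D.K ⊔ D.G1) : nomizu D X Y ∈ D.K ⊔ D.G1 :=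
  add_mem (Submodule.smul_mem _ _ (D.projm_mem _)) (D.Ubil_mem X hX Y hY)

lemma two_mul_gform_nomizu (hX : X ∈ D.K ⊔ D.G1) (hY : Y ∈ D.K ⊔ D.G1) (hZ : Z ∈ D.K ⊔ D.G1) :
    2 * D.gform (nomizu D X Y) Z =
      D.gform (D.projm ⁅X, Y⁆) Z + D.gform (D.projm ⁅Z, X⁆) Y + D.gform X (D.projm ⁅Z, Y⁆) := by
  simp only [nomizu, map_add, map_smul, LinearMap.add_apply, LinearMap.smul_apply, smul_eq_mul]
  linear_combination D.Ubil_def X hX Y hY Z hZ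

lemma gform_nomizu_add_gform_nomizu (hX : X ∈ D.K ⊔ D.G1) (hY : Y ∈ D.K ⊔ D.G1)
    (hZ : Z ∈ D.K ⊔ D.G1) :
    D.gform (nomizu D X Y) Z + D.gform Y (nomizu D X Z) = 0 := by
  have hYZ := D.two_mul_gform_nomizu hX hY hZ
  have hZY := D.two_mul_gform_nomizu hX hZ hY
  rw [D.projm_lie_swap Y X, D.projm_lie_swap Y Z, D.projm_lie_swap X Z] at hZY
  simp only [map_neg, LinearMap.neg_apply] at hZY
  rw [D.gform_comm hY (D.nomizu_mem hX hZ)]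
  linarith

lemma isHomogeneousSkew_ad (hx : x ∈ D.K) : D.IsHomogeneousSkew 0 (LieAlgebra.ad ℝ L x) :=
  ⟨fun _ ↦ D.lie_mem_mPart_of_mem_K (i := 0) hx, fun _ ↦ D.lie_mem_mPart_of_mem_K (i := 1) hx,
    fun _ hm _ hm' ↦ D.gform_lie_add_gform_lie hx hm hm'⟩

lemma isHomogeneousSkew_nomizuEnd (hX : X ∈ D.mPart i) : D.IsHomogeneousSkew i (D.nomizuEnd X) := by
  have hK : ∀ x ∈ D.K, nomizu D X x ∈ D.mPart i := fun x hx ↦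
    add_zero i ▸ D.nomizu_mem_mPart (j := 0) hX hx
  have hG1 : ∀ y ∈ D.G1, nomizu D X y ∈ D.mPart (i + 1) := fun y hy ↦
    D.nomizu_mem_mPart (j := 1) hX hy
  exact ⟨hK, hG1, fun _ hm _ hm' ↦ D.gform_nomizu_add_gform_nomizu (D.mPart_le i hX) hm hm'⟩

end ExtSymData

theorem statement_8_general [FiniteDimensional ℝ L] (D : ExtSymData L) :
    (∀ x ∈ D.K, D.IsHomogeneousSkew 0 (LieAlgebra.ad ℝ L x)) ∧
    (∀ y ∈ D.G1,
      (∀ x ∈ D.K, D.projm ⁅y, x⁆ ∈ D.G1) ∧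
      (∀ y' ∈ D.G1, D.projm ⁅y, y'⁆ ∈ D.K)) ∧
    (∀ x ∈ D.K, D.IsHomogeneousSkew 0 (D.nomizuEnd x)) ∧
    (∀ y ∈ D.G1, D.IsHomogeneousSkew 1 (D.nomizuEnd y)) :=
  ⟨fun _ hx ↦ D.isHomogeneousSkew_ad hx,
    fun _ hy ↦ ⟨fun _ hx ↦ D.projm_lie_mem (i := 1) (j := 0) hy hx,
      fun _ hy' ↦ D.projm_lie_mem (i := 1) (j := 1) hy hy'⟩,
    fun _ hx ↦ D.isHomogeneousSkew_nomizuEnd (i := 0) hx,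
    fun _ hy ↦ D.isHomogeneousSkew_nomizuEnd (i := 1) hy⟩

/-- For extended symmetric data:
(a) for `x ∈ 𝔨`, `ad(x)` preserves `𝔪` (indeed `𝔨` and `𝔤₁` separately) and is
`g`-skew on `𝔪`, i.e. `ad(x)|𝔪 ∈ so(𝔪)₀`;
(b) for `y ∈ 𝔤₁`, `proj_𝔪 ∘ ad(y)` maps `𝔨` into `𝔤₁` and `𝔤₁` into `𝔨`;
(c) for `x ∈ 𝔨`, `Λ(x) ∈ so(𝔪)₀`;
(d) for `y ∈ 𝔤₁`, `Λ(y) ∈ so(𝔪)₁`. -/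
theorem statement_8 [FiniteDimensional ℝ L] [LieAlgebra.IsSemisimple ℝ L]
    (D : ExtSymData L) :
    -- (a)
    (∀ x ∈ D.K,
      (∀ x' ∈ D.K, ⁅x, x'⁆ ∈ D.K) ∧
      (∀ y ∈ D.G1, ⁅x, y⁆ ∈ D.G1) ∧
      (∀ m ∈ D.K ⊔ D.G1, ∀ m' ∈ D.K ⊔ D.G1,
        D.gform ⁅x, m⁆ m' + D.gform m ⁅x, m'⁆ = 0)) ∧
    -- (b)
    (∀ y ∈ D.G1,
      (∀ x ∈ D.K, D.projm ⁅y, x⁆ ∈ D.G1) ∧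
      (∀ y' ∈ D.G1, D.projm ⁅y, y'⁆ ∈ D.K)) ∧
    -- (c)
    (∀ x ∈ D.K,
      (∀ x' ∈ D.K, nomizu D x x' ∈ D.K) ∧
      (∀ y ∈ D.G1, nomizu D x y ∈ D.G1) ∧
      (∀ m ∈ D.K ⊔ D.G1, ∀ m' ∈ D.K ⊔ D.G1,
        D.gform (nomizu D x m) m' + D.gform m (nomizu D x m') = 0)) ∧
    -- (d)
    (∀ y ∈ D.G1,
      (∀ x ∈ D.K, nomizu D y x ∈ D.G1) ∧
      (∀ y' ∈ D.G1, nomizu D y y' ∈ D.K) ∧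
      (∀ m ∈ D.K ⊔ D.G1, ∀ m' ∈ D.K ⊔ D.G1,
        D.gform (nomizu D y m) m' + D.gform m (nomizu D y m') = 0)) :=
  statement_8_general D
end
end

section
/- For all A, B ∈ 𝔪': Λ'(A)B − Λ'(B)A = proj_{𝔪'}([A,B]), where [A,B] is the bracket of 𝔤^ℂ (which lies in 𝔤'). -/
noncomputable section

variable {L : Type*} [LieRing L] [LieAlgebra ℝ L]

open scoped TensorProduct

/-- The embedding `v ↦ 1 ⊗ v` of `𝔤` into `𝔤^ℂ = ℂ ⊗[ℝ] 𝔤`. -/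
def iota1 {L : Type*} [LieRing L] [LieAlgebra ℝ L] : L →ₗ[ℝ] ℂ ⊗[ℝ] L :=
  TensorProduct.mk ℝ ℂ L 1

/-- The map `v ↦ i ⊗ v` of `𝔤` into `𝔤^ℂ = ℂ ⊗[ℝ] 𝔤`. -/
def iotaI {L : Type*} [LieRing L] [LieAlgebra ℝ L] : L →ₗ[ℝ] ℂ ⊗[ℝ] L :=
  TensorProduct.mk ℝ ℂ L Complex.I

/-- The value `Λ'(x + iy)(x' + iy')` of the dual Nomizu map, written out in
components:
`Λ'(x+iy)(x'+iy') = 1 ⊗ (Λ(x)x' - Λ(y)y') + i ⊗ (2[x,y'] - Λ(x)y' - Λ(y)x')`,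
which is exactly the piecewise definition
`Λ'(x)x' = Λ(x)x'`, `Λ'(x)(iy') = i(2[x,y'] - Λ(x)y')`,
`Λ'(iy)x' = -i Λ(y)x'`, `Λ'(iy)(iy') = -Λ(y)y'`. -/
def nomizuDual (D : ExtSymData L) (x y x' y' : L) : ℂ ⊗[ℝ] L :=
  iota1 (nomizu D x x' - nomizu D y y')
    + iotaI ((2 : ℝ) • ⁅x, y'⁆ - nomizu D x y' - nomizu D y x')

/- The identity says that `Λ'` is torsion-free, and it is inherited from the torsion-freeness
`Λ(X)Y - Λ(Y)X = proj_𝔪[X, Y]` of `Λ`, which holds because `U` is symmetric.  On `i𝔤₁ × i𝔤₁` both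
the torsion and the bracket change sign.  On the mixed part `[x, y']` lies in `𝔤₁`, hence is fixed
by `proj_𝔪`, and the term `2[x, y']` compensates the sign change of `Λ`:
`2[x, y'] - [x, y'] = [x, y']`. -/

theorem iota1_lie_iota1 (u v : L) : ⁅iota1 u, iota1 v⁆ = iota1 ⁅u, v⁆ := by
  simp [iota1]

theorem iota1_lie_iotaI (u v : L) : ⁅iota1 u, iotaI v⁆ = iotaI ⁅u, v⁆ := by
  simp [iota1, iotaI]

theorem iotaI_lie_iota1 (u v : L) : ⁅iotaI u, iota1 v⁆ = iotaI ⁅u, v⁆ := by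
  simp [iota1, iotaI]

theorem iotaI_lie_iotaI (u v : L) : ⁅iotaI u, iotaI v⁆ = -iota1 ⁅u, v⁆ := by
  simp [iota1, iotaI, TensorProduct.neg_tmul]

theorem iota1_add_iotaI_lie_iota1_add_iotaI (x y x' y' : L) :
    ⁅iota1 x + iotaI y, iota1 x' + iotaI y'⁆ =
      iota1 (⁅x, x'⁆ - ⁅y, y'⁆) + iotaI (⁅x, y'⁆ + ⁅y, x'⁆) := by
  rw [add_lie, lie_add, lie_add, iota1_lie_iota1, iota1_lie_iotaI, iotaI_lie_iota1,
    iotaI_lie_iotaI, map_sub, map_add]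
  abel

theorem nomizu_sub_nomizu_swap (D : ExtSymData L) (X Y : L) :
    nomizu D X Y - nomizu D Y X = D.projm ⁅X, Y⁆ := by
  simp only [nomizu, ← lie_skew X Y, map_neg, D.Ubil_symm Y X]
  module

/-- The value `Λ'(x + iy)(x' + iy')` of the dual of an arbitrary connection function `Λ`, encoded by
components as in `nomizuDual`, which is the case where `Λ` is the Nomizu map. -/
def dualConnection (Λ : L → L → L) (x y x' y' : L) : ℂ ⊗[ℝ] L :=
  iota1 (Λ x x' - Λ y y') + iotaI ((2 : ℝ) • ⁅x, y'⁆ - Λ x y' - Λ y x')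

theorem dualConnection_sub_dualConnection_swap (Λ : L → L → L) (x y x' y' : L) :
    dualConnection Λ x y x' y' - dualConnection Λ x' y' x y =
      iota1 ((Λ x x' - Λ x' x) - (Λ y y' - Λ y' y)) +
        iotaI ((2 : ℝ) • (⁅x, y'⁆ + ⁅y, x'⁆) - (Λ x y' - Λ y' x) - (Λ y x' - Λ x' y)) := by
  simp only [dualConnection, ← lie_skew y x', map_sub, map_add, map_smul, map_neg]
  module

theorem map_iota1_of_mem_sup {H K : Submodule ℝ L} {p : L →ₗ[ℝ] L}
    {p' : (ℂ ⊗[ℝ] L) →ₗ[ℝ] ℂ ⊗[ℝ] L} (hpH : ∀ h ∈ H, p h = 0) (hpK : ∀ k ∈ K, p k = k)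
    (hp'H : ∀ h ∈ H, p' (iota1 h) = 0) (hp'K : ∀ k ∈ K, p' (iota1 k) = iota1 k)
    {w : L} (hw : w ∈ H ⊔ K) : p' (iota1 w) = iota1 (p w) := by
  have eqOn_H : Set.EqOn (p' ∘ₗ iota1) (iota1 ∘ₗ p) H := fun h hh ↦ by
    simp [hpH h hh, hp'H h hh]
  have eqOn_K : Set.EqOn (p' ∘ₗ iota1) (iota1 ∘ₗ p) K := fun k hk ↦ by
    simp [hpK k hk, hp'K k hk]
  exact LinearMap.eqOn_sup eqOn_H eqOn_K hw

theorem statement_10_general {H K M : Submodule ℝ L}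
    (hKK : ∀ a ∈ K, ∀ b ∈ K, ⁅a, b⁆ ∈ H ⊔ K) (hKM : ∀ a ∈ K, ∀ b ∈ M, ⁅a, b⁆ ∈ M)
    (hMM : ∀ a ∈ M, ∀ b ∈ M, ⁅a, b⁆ ∈ H ⊔ K)
    {p : L →ₗ[ℝ] L} (hpH : ∀ h ∈ H, p h = 0) (hpKM : ∀ m ∈ K ⊔ M, p m = m)
    {Λ : L → L → L} (hΛ : ∀ X ∈ K ⊔ M, ∀ Y ∈ K ⊔ M, Λ X Y - Λ Y X = p ⁅X, Y⁆)
    {p' : (ℂ ⊗[ℝ] L) →ₗ[ℝ] ℂ ⊗[ℝ] L} (hp'H : ∀ h ∈ H, p' (iota1 h) = 0)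
    (hp'K : ∀ x ∈ K, p' (iota1 x) = iota1 x) (hp'M : ∀ y ∈ M, p' (iotaI y) = iotaI y)
    {x y x' y' : L} (hx : x ∈ K) (hy : y ∈ M) (hx' : x' ∈ K) (hy' : y' ∈ M) :
    dualConnection Λ x y x' y' - dualConnection Λ x' y' x y =
      p' ⁅iota1 x + iotaI y, iota1 x' + iotaI y'⁆ := by
  have hK : K ≤ K ⊔ M := le_sup_left
  have hM : M ≤ K ⊔ M := le_sup_right
  have hxy' : ⁅x, y'⁆ ∈ M := hKM x hx y' hy'
  have hyx' : ⁅y, x'⁆ ∈ M := lie_skew y x' ▸ M.neg_mem (hKM x' hx' y hy)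
  have heven : ⁅x, x'⁆ - ⁅y, y'⁆ ∈ H ⊔ K := sub_mem (hKK x hx x' hx') (hMM y hy y' hy')
  calc dualConnection Λ x y x' y' - dualConnection Λ x' y' x y
      = iota1 (p ⁅x, x'⁆ - p ⁅y, y'⁆) +
          iotaI ((2 : ℝ) • (⁅x, y'⁆ + ⁅y, x'⁆) - p ⁅x, y'⁆ - p ⁅y, x'⁆) := by
        rw [dualConnection_sub_dualConnection_swap, hΛ x (hK hx) x' (hK hx'),
          hΛ y (hM hy) y' (hM hy'), hΛ x (hK hx) y' (hM hy'), hΛ y (hM hy) x' (hK hx')]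
    _ = iota1 (p (⁅x, x'⁆ - ⁅y, y'⁆)) + iotaI (⁅x, y'⁆ + ⁅y, x'⁆) := by
        rw [hpKM _ (hM hxy'), hpKM _ (hM hyx'), map_sub p, two_smul, sub_sub, add_sub_cancel_right]
    _ = p' (iota1 (⁅x, x'⁆ - ⁅y, y'⁆) + iotaI (⁅x, y'⁆ + ⁅y, x'⁆)) := by
        rw [map_add p', hp'M _ (add_mem hxy' hyx'),
          map_iota1_of_mem_sup hpH (fun k hk ↦ hpKM k (hK hk)) hp'H hp'K heven]
    _ = p' ⁅iota1 x + iotaI y, iota1 x' + iotaI y'⁆ := by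
        rw [iota1_add_iotaI_lie_iota1_add_iotaI]

/-- For all `A, B ∈ 𝔪' = 𝔨 ⊕ i𝔤₁`:
`Λ'(A)B - Λ'(B)A = proj_{𝔪'}([A,B])`, where `[A,B]` is the bracket of
`𝔤^ℂ = ℂ ⊗[ℝ] 𝔤` and `proj_{𝔪'}` is (any `ℝ`-linear extension of) the
projection `𝔤' = 𝔥 ⊕ 𝔪' → 𝔪'` along `𝔥`. -/
theorem statement_10 [FiniteDimensional ℝ L] [LieAlgebra.IsSemisimple ℝ L]
    (D : ExtSymData L)
    (proj' : (ℂ ⊗[ℝ] L) →ₗ[ℝ] ℂ ⊗[ℝ] L)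
    (hproj'_H : ∀ h ∈ D.H, proj' (iota1 h) = 0)
    (hproj'_K : ∀ x ∈ D.K, proj' (iota1 x) = iota1 x)
    (hproj'_G1 : ∀ y ∈ D.G1, proj' (iotaI y) = iotaI y)
    (x : L) (hx : x ∈ D.K) (y : L) (hy : y ∈ D.G1)
    (x' : L) (hx' : x' ∈ D.K) (y' : L) (hy' : y' ∈ D.G1) :
    nomizuDual D x y x' y' - nomizuDual D x' y' x y
      = proj' ⁅iota1 x + iotaI y, iota1 x' + iotaI y'⁆ :=
  statement_10_general (fun a ha b hb ↦ Submodule.mem_sup_right (D.hK_sub a ha b hb))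
    (fun a ha ↦ D.hG0G1 a (Submodule.mem_sup_right ha)) D.hG1G1 D.projm_H D.projm_m
    (fun X _ Y _ ↦ nomizu_sub_nomizu_swap D X Y) hproj'_H hproj'_K hproj'_G1 hx hy hx' hy'
end
end

section
/- Let ω := e^{123} − e^{145} − e^{167} − e^{246} + e^{257} − e^{347} − e^{356} (this is the G₂-form η_1∧η_2∧η_3 + Σ_{i=1}^3 η_i∧Φ_i^H, where Φ_i^H denotes the part of Φ_i not involving e^1, e^2, e^3). Then ω·ψ_0 = −7 ψ_0. -/
noncomputable section

/- Context: the spin representation in dimension 7, realized on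
`Σ = Λ^•(ℂ³)`, modelled as `Finset (Fin 3) → ℂ` (coefficients with respect to
the orthonormal basis of monomials `y_{i₁} ∧ ⋯ ∧ y_{i_k}`, `i₁ < ⋯ < i_k`).
`cOp j` is wedging with `y_j`, `aOp j` is its adjoint, and `γ` is the Clifford
multiplication of `ℝ⁷` determined by
`γ(e₁) = i` on even-degree and `-i` on odd-degree elements,
`γ(e_{2j}) = i(a_j + c_j)`, `γ(e_{2j+1}) = c_j - a_j`.
Indices of `e₁,…,e₇` (resp. `y₁,y₂,y₃`) are shifted to `Fin 7` (resp. `Fin 3`),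
so `e_s` is `estd (s-1)` and `y_j` corresponds to `j-1 : Fin 3`. -/

open Complex

/-- The spinor module `Σ = Λ^•(ℂ³)`, as coefficient functions on the monomial
basis indexed by subsets of `{1,2,3}`. -/
abbrev SpinorRep := Finset (Fin 3) → ℂ

/-- The sign `(-1)^{#{i ∈ S | i < j}}` arising when wedging `y_j` into the
monomial indexed by `S`. -/
def csign (j : Fin 3) (S : Finset (Fin 3)) : ℂ := (-1 : ℂ) ^ (S.filter (· < j)).card

/-- Creation operator `c_j`: wedge product with `y_j`. -/
def cOp (j : Fin 3) : SpinorRep →ₗ[ℂ] SpinorRep where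
  toFun ψ := fun S => if j ∈ S then csign j S * ψ (S.erase j) else 0
  map_add' ψ χ := by
    funext S
    by_cases h : j ∈ S <;> simp [h, mul_add]
  map_smul' c ψ := by
    funext S
    by_cases h : j ∈ S <;> simp [h] <;> ring

/-- Annihilation operator `a_j = c_j^*`: the adjoint of `c_j` with respect to
the Hermitian inner product making the monomials orthonormal. -/
def aOp (j : Fin 3) : SpinorRep →ₗ[ℂ] SpinorRep where
  toFun ψ := fun S => if j ∈ S then 0 else csign j S * ψ (insert j S)
  map_add' ψ χ := by
    funext S
    by_cases h : j ∈ S <;> simp [h, mul_add]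
  map_smul' c ψ := by
    funext S
    by_cases h : j ∈ S <;> simp [h] <;> ring

/-- `γ(e₁)`: multiplication by `i` on even-degree and by `-i` on odd-degree
elements. -/
def parityOp : SpinorRep →ₗ[ℂ] SpinorRep where
  toFun ψ := fun S => (if Even S.card then I else -I) * ψ S
  map_add' ψ χ := by funext S; simp [mul_add]
  map_smul' c ψ := by funext S; simp; ring

/-- Clifford multiplication by the standard basis vectors `e₁,…,e₇` of `ℝ⁷`. -/
def gammaBasis : Fin 7 → (SpinorRep →ₗ[ℂ] SpinorRep)
  | 0 => parityOp
  | 1 => I • (aOp 0 + cOp 0)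
  | 2 => cOp 0 - aOp 0
  | 3 => I • (aOp 1 + cOp 1)
  | 4 => cOp 1 - aOp 1
  | 5 => I • (aOp 2 + cOp 2)
  | 6 => cOp 2 - aOp 2

/-- Clifford multiplication `γ(v)` for `v ∈ ℝ⁷`. -/
def gamma (v : Fin 7 → ℝ) : SpinorRep →ₗ[ℂ] SpinorRep :=
  ∑ s : Fin 7, (v s : ℂ) • gammaBasis s

/-- The index in `Fin 7` of the Reeb direction `ξ_i = e_i`, `i = 1,2,3`. -/
def xiIdx (i : Fin 3) : Fin 7 := ⟨i.val, by omega⟩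

/-- The action of the fundamental 2-forms
`Φ₁ = -e^{23} - e^{45} - e^{67}`, `Φ₂ = e^{13} - e^{46} + e^{57}`,
`Φ₃ = -e^{12} - e^{47} - e^{56}` on spinors, via
`τ·ψ = Σ_{p<q} τ_{pq} γ(e_p)γ(e_q)ψ`. -/
def PhiOp : Fin 3 → (SpinorRep →ₗ[ℂ] SpinorRep)
  | 0 => -(gammaBasis 1 ∘ₗ gammaBasis 2) - gammaBasis 3 ∘ₗ gammaBasis 4
         - gammaBasis 5 ∘ₗ gammaBasis 6
  | 1 => gammaBasis 0 ∘ₗ gammaBasis 2 - gammaBasis 3 ∘ₗ gammaBasis 5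
         + gammaBasis 4 ∘ₗ gammaBasis 6
  | 2 => -(gammaBasis 0 ∘ₗ gammaBasis 1) - gammaBasis 3 ∘ₗ gammaBasis 6
         - gammaBasis 4 ∘ₗ gammaBasis 5

/-- The canonical spinor `ψ₀ = (y₂ ∧ y₃ + i y₁)/√2`. -/
def psi0 : SpinorRep := fun S =>
  if S = ({1, 2} : Finset (Fin 3)) then (Real.sqrt 2 : ℂ)⁻¹
  else if S = ({0} : Finset (Fin 3)) then I * (Real.sqrt 2 : ℂ)⁻¹
  else 0

/-- The auxiliary spinors `ψ_i = ξ_i · ψ₀`, `i = 1,2,3`. -/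
def psiAux (i : Fin 3) : SpinorRep := gammaBasis (xiIdx i) psi0

/-!
Write `ω = e¹ ∧ κ + ρ` with `κ = e²³ - e⁴⁵ - e⁶⁷` and `ρ = -e²⁴⁶ + e²⁵⁷ - e³⁴⁷ - e³⁵⁶`.
Each `γ(e₁)γ(e_{2j})γ(e_{2j+1})` is diagonal in the monomial basis, and the eigenvalues of the two
monomials of `ψ₀` agree (`-1` for `j = 1` and `1` for `j = 2, 3`), so `e¹ ∧ κ` contributes `-3`.
Up to sign, `ρ` is the real part of the holomorphic volume form for which `c₁, a₂, a₃` have the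
same type: it acts as `4i(c₁a₂a₃ + a₁c₂c₃)`, which exchanges the monomials `y₂ ∧ y₃` and `y₁` of
`ψ₀` up to scalars and contributes `-4`.
-/

/-- The monomial `y_{i₁} ∧ ⋯ ∧ y_{i_k}`, for `T = {i₁ < ⋯ < i_k}`, as an element of the spinor
module; these form its orthonormal basis. -/
def wedgeMonomial (T : Finset (Fin 3)) : SpinorRep := Pi.single T 1

/-- Clifford multiplication by `e_{2j}`, the first vector of the `j`-th coordinate plane, for
`j = 1, 2, 3` shifted to `Fin 3`. Unlike `gammaBasis`, it allows statements uniform in `j`. -/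
def gammaEven (j : Fin 3) : SpinorRep →ₗ[ℂ] SpinorRep := I • (aOp j + cOp j)

/-- Clifford multiplication by `e_{2j+1}`, the second vector of the `j`-th coordinate plane, for
`j = 1, 2, 3` shifted to `Fin 3`. -/
def gammaOdd (j : Fin 3) : SpinorRep →ₗ[ℂ] SpinorRep := cOp j - aOp j

theorem csign_mul_self (j : Fin 3) (T : Finset (Fin 3)) : csign j T * csign j T = 1 := by
  rw [csign, ← mul_pow, neg_one_mul, neg_neg, one_pow]

theorem csign_insert_self (j : Fin 3) (T : Finset (Fin 3)) : csign j (insert j T) = csign j T := by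
  rw [csign, csign, Finset.filter_insert, if_neg (lt_irrefl j)]

theorem csign_erase_self (j : Fin 3) (T : Finset (Fin 3)) : csign j (T.erase j) = csign j T := by
  rw [csign, csign, Finset.filter_erase, Finset.erase_eq_of_notMem (by simp)]

section Monomials

variable {j : Fin 3} {T : Finset (Fin 3)}

theorem cOp_wedgeMonomial_of_mem (h : j ∈ T) : cOp j (wedgeMonomial T) = 0 := by
  funext S
  have hne : S.erase j ≠ T := fun hST ↦ Finset.notMem_erase j S (hST ▸ h)
  simp [cOp, wedgeMonomial, hne]

theorem cOp_wedgeMonomial_of_notMem (h : j ∉ T) :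
    cOp j (wedgeMonomial T) = csign j T • wedgeMonomial (insert j T) := by
  funext S
  by_cases hS : S = insert j T
  · simp [hS, cOp, wedgeMonomial, csign_insert_self, Finset.erase_insert h]
  · have hne (hj : j ∈ S) : S.erase j ≠ T := fun hST ↦ hS (by rw [← hST, Finset.insert_erase hj])
    simp +contextual [cOp, wedgeMonomial, hS, hne]

theorem aOp_wedgeMonomial_of_mem (h : j ∈ T) :
    aOp j (wedgeMonomial T) = csign j T • wedgeMonomial (T.erase j) := by
  funext S
  by_cases hS : S = T.erase j
  · simp [hS, aOp, wedgeMonomial, csign_erase_self, Finset.insert_erase h]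
  · have hne (hj : j ∉ S) : insert j S ≠ T := fun hST ↦ hS (by rw [← hST, Finset.erase_insert hj])
    simp +contextual [aOp, wedgeMonomial, hS, hne]

theorem aOp_wedgeMonomial_of_notMem (h : j ∉ T) : aOp j (wedgeMonomial T) = 0 := by
  funext S
  have hne : insert j S ≠ T := fun hST ↦ h (hST ▸ Finset.mem_insert_self j S)
  simp [aOp, wedgeMonomial, hne]

end Monomials

theorem parityOp_wedgeMonomial (T : Finset (Fin 3)) :
    parityOp (wedgeMonomial T) = (I * (-1) ^ T.card) • wedgeMonomial T := by
  funext S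
  by_cases hS : S = T
  · rcases Nat.even_or_odd T.card with hT | hT
    · simp [hS, parityOp, wedgeMonomial, hT]
    · simp [hS, parityOp, wedgeMonomial, hT.neg_one_pow, Nat.not_even_iff_odd.mpr hT]
  · simp [parityOp, wedgeMonomial, hS]

theorem gammaEven_gammaOdd_wedgeMonomial (j : Fin 3) (T : Finset (Fin 3)) :
    gammaEven j (gammaOdd j (wedgeMonomial T)) = (if j ∈ T then -I else I) • wedgeMonomial T := by
  by_cases h : j ∈ T
  · have hT : j ∉ T.erase j := Finset.notMem_erase j T
    have hodd : gammaOdd j (wedgeMonomial T) = -csign j T • wedgeMonomial (T.erase j) := by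
      rw [gammaOdd, LinearMap.sub_apply, cOp_wedgeMonomial_of_mem h, aOp_wedgeMonomial_of_mem h,
        zero_sub, neg_smul]
    rw [hodd, map_smul, gammaEven, LinearMap.smul_apply, LinearMap.add_apply,
      aOp_wedgeMonomial_of_notMem hT, cOp_wedgeMonomial_of_notMem hT, csign_erase_self,
      Finset.insert_erase h, zero_add, smul_smul, smul_smul, if_pos h]
    congr 1
    linear_combination (-I) * csign_mul_self j T
  · have hT : j ∈ insert j T := Finset.mem_insert_self j T
    have hodd : gammaOdd j (wedgeMonomial T) = csign j T • wedgeMonomial (insert j T) := by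
      rw [gammaOdd, LinearMap.sub_apply, cOp_wedgeMonomial_of_notMem h,
        aOp_wedgeMonomial_of_notMem h, sub_zero]
    rw [hodd, map_smul, gammaEven, LinearMap.smul_apply, LinearMap.add_apply,
      aOp_wedgeMonomial_of_mem hT, cOp_wedgeMonomial_of_mem hT, csign_insert_self,
      Finset.erase_insert h, add_zero, smul_smul, smul_smul, if_neg h]
    congr 1
    linear_combination I * csign_mul_self j T

theorem parityOp_gammaEven_gammaOdd_wedgeMonomial (j : Fin 3) (T : Finset (Fin 3)) :
    parityOp (gammaEven j (gammaOdd j (wedgeMonomial T))) =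
      ((-1) ^ T.card * if j ∈ T then 1 else -1 : ℂ) • wedgeMonomial T := by
  rw [gammaEven_gammaOdd_wedgeMonomial, map_smul, parityOp_wedgeMonomial, smul_smul]
  congr 1
  split_ifs
  · linear_combination (-(-1) ^ T.card) * I_mul_I
  · linear_combination (-1) ^ T.card * I_mul_I

theorem gamma_realVolume_eq_cOp_aOp (j k l : Fin 3) (ψ : SpinorRep) :
    -gammaEven j (gammaEven k (gammaEven l ψ)) + gammaEven j (gammaOdd k (gammaOdd l ψ))
        - gammaOdd j (gammaEven k (gammaOdd l ψ)) - gammaOdd j (gammaOdd k (gammaEven l ψ)) =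
      (4 * I) • (cOp j (aOp k (aOp l ψ)) + aOp j (cOp k (cOp l ψ))) := by
  simp only [gammaEven, gammaOdd, LinearMap.smul_apply, LinearMap.add_apply, LinearMap.sub_apply,
    map_smul, map_add, map_sub, smul_add, smul_smul, I_mul_I]
  module

theorem psi0_eq_wedgeMonomial :
    psi0 = (Real.sqrt 2 : ℂ)⁻¹ • (wedgeMonomial {1, 2} + I • wedgeMonomial {0}) := by
  funext S
  have hne : ({0} : Finset (Fin 3)) ≠ {1, 2} := by decide
  by_cases h : S = {1, 2}
  · simp [psi0, wedgeMonomial, h, hne.symm]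
  · by_cases h0 : S = {0} <;> simp [psi0, wedgeMonomial, h, h0, hne, mul_comm]

theorem parityOp_gammaEven_gammaOdd_psi0 (j : Fin 3) :
    parityOp (gammaEven j (gammaOdd j psi0)) = (if j = 0 then -1 else 1 : ℂ) • psi0 := by
  simp only [psi0_eq_wedgeMonomial, map_smul, map_add, parityOp_gammaEven_gammaOdd_wedgeMonomial]
  fin_cases j <;> simp

theorem cOp_zero_aOp_one_aOp_two_wedgeMonomial :
    cOp 0 (aOp 1 (aOp 2 (wedgeMonomial {1, 2}))) = -wedgeMonomial {0} := by
  have h₂ : aOp 2 (wedgeMonomial {1, 2}) = -wedgeMonomial {1} := by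
    have hset : ({1, 2} : Finset (Fin 3)).erase 2 = {1} := by decide
    simp [aOp_wedgeMonomial_of_mem, csign, hset, Finset.filter_insert, Finset.filter_singleton]
  have h₁ : aOp 1 (wedgeMonomial {1}) = wedgeMonomial ∅ := by
    simp [aOp_wedgeMonomial_of_mem, csign, Finset.filter_singleton]
  have h₀ : cOp 0 (wedgeMonomial ∅) = wedgeMonomial {0} := by
    simp [cOp_wedgeMonomial_of_notMem, csign]
  rw [h₂, map_neg, h₁, map_neg, h₀]

theorem aOp_zero_cOp_one_cOp_two_wedgeMonomial :
    aOp 0 (cOp 1 (cOp 2 (wedgeMonomial {0}))) = wedgeMonomial {1, 2} := by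
  have h₂ : cOp 2 (wedgeMonomial {0}) = -wedgeMonomial {0, 2} := by
    simp [cOp_wedgeMonomial_of_notMem, csign, Finset.filter_singleton, Finset.pair_comm]
  have h₁ : cOp 1 (wedgeMonomial {0, 2}) = -wedgeMonomial {0, 1, 2} := by
    simp [cOp_wedgeMonomial_of_notMem, csign, Finset.filter_insert, Finset.filter_singleton,
      Finset.insert_comm]
  have h₀ : aOp 0 (wedgeMonomial {0, 1, 2}) = wedgeMonomial {1, 2} := by
    simp [aOp_wedgeMonomial_of_mem, csign]
  rw [h₂, map_neg, h₁, neg_neg, h₀]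

theorem cOp_aOp_aOp_psi0_add_aOp_cOp_cOp_psi0 :
    cOp 0 (aOp 1 (aOp 2 psi0)) + aOp 0 (cOp 1 (cOp 2 psi0)) = I • psi0 := by
  have h₁ : cOp 0 (aOp 1 (aOp 2 (wedgeMonomial {0}))) = 0 := by
    rw [aOp_wedgeMonomial_of_notMem (by decide), map_zero, map_zero]
  have h₂ : aOp 0 (cOp 1 (cOp 2 (wedgeMonomial {1, 2}))) = 0 := by
    rw [cOp_wedgeMonomial_of_mem (by decide), map_zero, map_zero]
  rw [psi0_eq_wedgeMonomial, smul_comm I, smul_add I, smul_smul I I, I_mul_I]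
  simp only [map_smul, map_add, cOp_zero_aOp_one_aOp_two_wedgeMonomial,
    aOp_zero_cOp_one_cOp_two_wedgeMonomial, h₁, h₂]
  module

/-- With `ω = e^{123} - e^{145} - e^{167} - e^{246} + e^{257}
- e^{347} - e^{356}` (the `G₂`-form `η₁∧η₂∧η₃ + Σᵢ ηᵢ∧Φᵢ^H`), acting on spinors
by `σ·ψ = Σ_{p<q<r} σ_{pqr} γ(e_p)γ(e_q)γ(e_r)ψ`: `ω·ψ₀ = -7ψ₀`. -/
theorem statement_12 :
    gammaBasis 0 (gammaBasis 1 (gammaBasis 2 psi0))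
      - gammaBasis 0 (gammaBasis 3 (gammaBasis 4 psi0))
      - gammaBasis 0 (gammaBasis 5 (gammaBasis 6 psi0))
      - gammaBasis 1 (gammaBasis 3 (gammaBasis 5 psi0))
      + gammaBasis 1 (gammaBasis 4 (gammaBasis 6 psi0))
      - gammaBasis 2 (gammaBasis 3 (gammaBasis 6 psi0))
      - gammaBasis 2 (gammaBasis 4 (gammaBasis 5 psi0))
    = (-7 : ℂ) • psi0 := by
  have h₁₂₃ : gammaBasis 0 (gammaBasis 1 (gammaBasis 2 psi0)) = (-1 : ℂ) • psi0 :=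
    parityOp_gammaEven_gammaOdd_psi0 0
  have h₁₄₅ : gammaBasis 0 (gammaBasis 3 (gammaBasis 4 psi0)) = (1 : ℂ) • psi0 :=
    parityOp_gammaEven_gammaOdd_psi0 1
  have h₁₆₇ : gammaBasis 0 (gammaBasis 5 (gammaBasis 6 psi0)) = (1 : ℂ) • psi0 :=
    parityOp_gammaEven_gammaOdd_psi0 2
  have hρ : -gammaBasis 1 (gammaBasis 3 (gammaBasis 5 psi0))
        + gammaBasis 1 (gammaBasis 4 (gammaBasis 6 psi0))
        - gammaBasis 2 (gammaBasis 3 (gammaBasis 6 psi0))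
        - gammaBasis 2 (gammaBasis 4 (gammaBasis 5 psi0)) = (-4 : ℂ) • psi0 := by
    refine (gamma_realVolume_eq_cOp_aOp 0 1 2 psi0).trans ?_
    rw [cOp_aOp_aOp_psi0_add_aOp_cOp_cOp_psi0, smul_smul, mul_assoc, I_mul_I, mul_neg_one]
  linear_combination (norm := module) h₁₂₃ - h₁₄₅ - h₁₆₇ + hρ
end
end

section
/- For all i, j ∈ {1,2,3} with i ≠ j: Φ_i·ψ_0 = ψ_i; Φ_i·ψ_i = γ(ξ_i)ψ_i; and Φ_i·ψ_j = −3 γ(ξ_i)ψ_j. -/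
noncomputable section

/- Context: the spin representation in dimension 7, realized on
`Σ = Λ^•(ℂ³)`, modelled as `Finset (Fin 3) → ℂ` (coefficients with respect to
the orthonormal basis of monomials `y_{i₁} ∧ ⋯ ∧ y_{i_k}`, `i₁ < ⋯ < i_k`).
`cOp j` is wedging with `y_j`, `aOp j` is its adjoint, and `γ` is the Clifford
multiplication of `ℝ⁷` determined by
`γ(e₁) = i` on even-degree and `-i` on odd-degree elements,
`γ(e_{2j}) = i(a_j + c_j)`, `γ(e_{2j+1}) = c_j - a_j`.
Indices of `e₁,…,e₇` (resp. `y₁,y₂,y₃`) are shifted to `Fin 7` (resp. `Fin 3`),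
so `e_s` is `estd (s-1)` and `y_j` corresponds to `j-1 : Fin 3`. -/

open Complex

/-!
On the monomial basis every `γ(e_s)` is, up to a power of `i`, a Pauli operator `Z_T X_U`
(the Jordan–Wigner picture of `Λ^•(ℂ³)`), so the Clifford relations become parity counts. The
canonical spinor `ψ₀` is fixed by the words `γ_r γ_p γ_q` on the seven lines of the Fano plane, for
a suitable order of each line, hence `γ_p γ_q ψ₀ = -γ_r ψ₀`.

Write `Φ_i = H_i - V_i`, where `V_i = ξ_{i+1} ∧ ξ_{i+2}` and `H_i` involves only `e_4, …, e_7`. The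
stabilizer relations give `V_i ψ₀ = ψ_i` and `H_i ψ₀ = 2 ψ_i`. Clifford multiplication by any `ξ_j`
commutes with `H_i`; it commutes with `V_i` if `j = i` and anticommutes otherwise. So
`Φ_i ψ_i = ξ_i (2 - 1) ψ_i` and, for `j ≠ i`, `Φ_i ψ_j = ξ_j (2 + 1) ψ_i = -3 ξ_i ψ_j`.
-/

open scoped symmDiff

section FinsetParity

variable {ι : Type*} [DecidableEq ι]

theorem neg_one_pow_card_symmDiff {R : Type*} [Ring R] (A B : Finset ι) :
    (-1 : R) ^ (A ∆ B).card = (-1) ^ A.card * (-1) ^ B.card := by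
  have hcard : (A ∆ B).card + 2 * (A ∩ B).card = A.card + B.card := by
    have hA := Finset.card_sdiff_add_card_inter A B
    have hB := Finset.card_sdiff_add_card_inter B A
    rw [Finset.inter_comm] at hB
    have hAB : (A ∆ B).card = (A \ B).card + (B \ A).card :=
      Finset.card_union_of_disjoint disjoint_sdiff_sdiff
    lia
  rw [← pow_add, ← hcard, pow_add, (even_two_mul _).neg_one_pow, mul_one]

theorem symmDiff_singleton_of_mem {j : ι} {S : Finset ι} (h : j ∈ S) : S ∆ {j} = S.erase j := by
  ext i
  by_cases hi : i = j <;> simp [Finset.mem_symmDiff, hi, h]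

theorem symmDiff_singleton_of_notMem {j : ι} {S : Finset ι} (h : j ∉ S) :
    S ∆ {j} = insert j S := by
  ext i
  by_cases hi : i = j <;> simp [Finset.mem_symmDiff, hi, h]

end FinsetParity

/-- A word `i^k Z_T X_U` in the Pauli group on qubits indexed by `ι`, where `k = phase`,
`T = sign` and `U = flip`. The phase is kept in `ℕ`, although only its class modulo `4` matters,
so that identities between words can be decided. -/
structure PauliWord (ι : Type*) where
  phase : ℕ
  sign : Finset ι
  flip : Finset ι

namespace PauliWord

variable {ι : Type*} [DecidableEq ι]

/-- The product in the Pauli group; the phase comes from moving `X_U` past `Z_T'`. -/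
instance : Mul (PauliWord ι) where
  mul v w := ⟨v.phase + w.phase + 2 * (w.sign ∩ v.flip).card, v.sign ∆ w.sign, v.flip ∆ w.flip⟩

/-- The operator of a Pauli word on `⨂_ι ℂ²` (for finite `ι`), modelled as coefficient functions
with respect to the monomials indexed by `Finset ι`: `X_U` permutes the monomials by
`S ↦ S ∆ U`, and then `Z_T` multiplies the one indexed by `S` by `(-1)^{#(T ∩ S)}`. -/
def toLin (w : PauliWord ι) : (Finset ι → ℂ) →ₗ[ℂ] (Finset ι → ℂ) where
  toFun ψ S := I ^ w.phase * (-1) ^ (w.sign ∩ S).card * ψ (S ∆ w.flip)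
  map_add' ψ χ := by
    funext S
    simp only [Pi.add_apply, mul_add]
  map_smul' c ψ := by
    funext S
    simp only [Pi.smul_apply, smul_eq_mul, RingHom.id_apply]
    ring

theorem toLin_apply (w : PauliWord ι) (ψ : Finset ι → ℂ) (S : Finset ι) :
    w.toLin ψ S = I ^ w.phase * (-1) ^ (w.sign ∩ S).card * ψ (S ∆ w.flip) := rfl

theorem phase_mul (v w : PauliWord ι) :
    (v * w).phase = v.phase + w.phase + 2 * (w.sign ∩ v.flip).card := rfl

theorem sign_mul (v w : PauliWord ι) : (v * w).sign = v.sign ∆ w.sign := rfl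

theorem flip_mul (v w : PauliWord ι) : (v * w).flip = v.flip ∆ w.flip := rfl

theorem toLin_toLin (v w : PauliWord ι) (ψ : Finset ι → ℂ) :
    v.toLin (w.toLin ψ) = (v * w).toLin ψ := by
  funext S
  have hleft : w.sign ∩ (S ∆ v.flip) = (w.sign ∩ S) ∆ (w.sign ∩ v.flip) :=
    inf_symmDiff_distrib_left _ _ _
  have hright : (v.sign ∆ w.sign) ∩ S = (v.sign ∩ S) ∆ (w.sign ∩ S) :=
    inf_symmDiff_distrib_right _ _ _
  simp only [toLin_apply, phase_mul, sign_mul, flip_mul, hleft, hright, neg_one_pow_card_symmDiff,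
    symmDiff_assoc, pow_add, pow_mul, I_sq]
  ring

theorem toLin_anticomm {v w : PauliWord ι}
    (h : Odd ((w.sign ∩ v.flip).card + (v.sign ∩ w.flip).card)) (ψ : Finset ι → ℂ) :
    v.toLin (w.toLin ψ) = -w.toLin (v.toLin ψ) := by
  have hsign : (-1 : ℂ) ^ (w.sign ∩ v.flip).card = -(-1) ^ (v.sign ∩ w.flip).card := by
    rcases Nat.even_or_odd (v.sign ∩ w.flip).card with heven | hodd
    · rw [heven.neg_one_pow, (Nat.odd_add.1 h |>.2 heven).neg_one_pow]
    · rw [hodd.neg_one_pow, (Nat.odd_add'.1 h |>.1 hodd).neg_one_pow, neg_neg]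
  funext S
  rw [toLin_toLin, toLin_toLin, Pi.neg_apply]
  simp only [toLin_apply, phase_mul, sign_mul, flip_mul, pow_add, pow_mul, I_sq, hsign,
    symmDiff_comm w.sign, symmDiff_comm w.flip]
  ring

theorem toLin_toLin_self {w : PauliWord ι} (h : Odd (w.phase + (w.sign ∩ w.flip).card))
    (ψ : Finset ι → ℂ) : w.toLin (w.toLin ψ) = -ψ := by
  have hphase : I ^ (w * w).phase = -1 := by
    rw [phase_mul, ← two_mul, ← mul_add, pow_mul, I_sq, h.neg_one_pow]
  funext S
  rw [toLin_toLin, toLin_apply, hphase, sign_mul, flip_mul, symmDiff_self, symmDiff_self,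
    symmDiff_bot, Finset.bot_eq_empty, Finset.empty_inter, Finset.card_empty, pow_zero, mul_one,
    neg_one_mul, Pi.neg_apply]

end PauliWord

theorem csign_eq (j : Fin 3) (S : Finset (Fin 3)) :
    csign j S = (-1) ^ (Finset.Iio j ∩ S).card := by
  rw [csign]
  congr 2
  ext i
  simp [and_comm]

theorem neg_one_pow_card_Iic_inter (j : Fin 3) (S : Finset (Fin 3)) :
    (-1 : ℂ) ^ (Finset.Iic j ∩ S).card = if j ∈ S then -csign j S else csign j S := by
  rw [csign_eq, ← Finset.Iio_insert]
  split_ifs with h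
  · rw [Finset.insert_inter_of_mem h, Finset.card_insert_of_notMem (by simp), pow_succ, mul_neg_one]
  · rw [Finset.insert_inter_of_notMem h]

theorem parityOp_eq_toLin : parityOp = PauliWord.toLin ⟨1, Finset.univ, ∅⟩ := by
  refine LinearMap.ext fun ψ => funext fun S => ?_
  by_cases h : Even S.card
  · simp [parityOp, PauliWord.toLin_apply, ← Finset.bot_eq_empty, h]
  · simp [parityOp, PauliWord.toLin_apply, ← Finset.bot_eq_empty, h,
      (Nat.not_even_iff_odd.1 h).neg_one_pow]

theorem I_smul_aOp_add_cOp_eq_toLin (j : Fin 3) :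
    I • (aOp j + cOp j) = PauliWord.toLin ⟨1, Finset.Iio j, {j}⟩ := by
  refine LinearMap.ext fun ψ => funext fun S => ?_
  by_cases h : j ∈ S
  · simp [aOp, cOp, PauliWord.toLin_apply, csign_eq, h, symmDiff_singleton_of_mem, mul_assoc]
  · simp [aOp, cOp, PauliWord.toLin_apply, csign_eq, h, symmDiff_singleton_of_notMem, mul_assoc]

theorem cOp_sub_aOp_eq_toLin (j : Fin 3) :
    cOp j - aOp j = PauliWord.toLin ⟨2, Finset.Iic j, {j}⟩ := by
  refine LinearMap.ext fun ψ => funext fun S => ?_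
  by_cases h : j ∈ S
  · simp [aOp, cOp, PauliWord.toLin_apply, neg_one_pow_card_Iic_inter, h,
      symmDiff_singleton_of_mem]
  · simp [aOp, cOp, PauliWord.toLin_apply, neg_one_pow_card_Iic_inter, h,
      symmDiff_singleton_of_notMem]

/-- The Pauli words of the Clifford generators `γ(e_1), …, γ(e_7)` (phase `2` is the sign `-1`). -/
def gammaWord : Fin 7 → PauliWord (Fin 3)
  | 0 => ⟨1, Finset.univ, ∅⟩
  | 1 => ⟨1, Finset.Iio 0, {0}⟩
  | 2 => ⟨2, Finset.Iic 0, {0}⟩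
  | 3 => ⟨1, Finset.Iio 1, {1}⟩
  | 4 => ⟨2, Finset.Iic 1, {1}⟩
  | 5 => ⟨1, Finset.Iio 2, {2}⟩
  | 6 => ⟨2, Finset.Iic 2, {2}⟩

theorem gammaBasis_eq_toLin : ∀ s : Fin 7, gammaBasis s = (gammaWord s).toLin
  | 0 => parityOp_eq_toLin
  | 1 => I_smul_aOp_add_cOp_eq_toLin 0
  | 2 => cOp_sub_aOp_eq_toLin 0
  | 3 => I_smul_aOp_add_cOp_eq_toLin 1
  | 4 => cOp_sub_aOp_eq_toLin 1
  | 5 => I_smul_aOp_add_cOp_eq_toLin 2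
  | 6 => cOp_sub_aOp_eq_toLin 2

theorem gammaBasis_anticomm {p q : Fin 7} (h : p ≠ q) (ψ : SpinorRep) :
    gammaBasis p (gammaBasis q ψ) = -gammaBasis q (gammaBasis p ψ) := by
  have hodd : Odd (((gammaWord q).sign ∩ (gammaWord p).flip).card +
      ((gammaWord p).sign ∩ (gammaWord q).flip).card) := by
    revert p q
    decide
  rw [gammaBasis_eq_toLin, gammaBasis_eq_toLin, PauliWord.toLin_anticomm hodd]

theorem gammaBasis_gammaBasis_self (s : Fin 7) (ψ : SpinorRep) :
    gammaBasis s (gammaBasis s ψ) = -ψ := by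
  have hodd : Odd ((gammaWord s).phase + ((gammaWord s).sign ∩ (gammaWord s).flip).card) := by
    revert s
    decide
  rw [gammaBasis_eq_toLin, PauliWord.toLin_toLin_self hodd]

theorem gammaBasis_comm_mul {p q r : Fin 7} (hq : p ≠ q) (hr : p ≠ r) (ψ : SpinorRep) :
    gammaBasis p (gammaBasis q (gammaBasis r ψ)) =
      gammaBasis q (gammaBasis r (gammaBasis p ψ)) := by
  rw [gammaBasis_anticomm hq, gammaBasis_anticomm hr, map_neg, neg_neg]

theorem psi0_symmDiff_univ (S : Finset (Fin 3)) :
    psi0 (S ∆ Finset.univ) = I * (-1) ^ S.card * psi0 S := by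
  have hpair : S ∆ Finset.univ = {1, 2} ↔ S = {0} := by
    revert S
    decide
  have hsingle : S ∆ Finset.univ = {0} ↔ S = {1, 2} := by
    revert S
    decide
  have hne : ({0} : Finset (Fin 3)) ≠ {1, 2} := by decide
  rcases eq_or_ne S {0} with rfl | hS₀
  · simp [psi0, hpair, hne, ← mul_assoc]
  · rcases eq_or_ne S {1, 2} with rfl | hS₁₂
    · simp [psi0, hpair, hsingle, hne.symm]
    · simp [psi0, hpair, hsingle, hS₀, hS₁₂]

theorem neg_one_pow_card_inter_mul_psi0 (T S : Finset (Fin 3)) :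
    (-1) ^ (T ∩ S).card * psi0 S =
      ((-1) ^ T.card) ^ (S.card + 1) * (-1) ^ (T ∩ {0}).card * psi0 S := by
  rcases eq_or_ne S {0} with rfl | hS₀
  · simp [← pow_mul]
  · rcases eq_or_ne S {1, 2} with rfl | hS₁₂
    · have hT : (T ∩ {1, 2}) = T ∆ (T ∩ {0}) := by
        revert T
        decide
      rw [hT, neg_one_pow_card_symmDiff]
      simp [pow_succ, ← mul_pow]
    · simp [psi0, hS₀, hS₁₂]

/-- A decidable criterion for a Pauli word to fix the canonical spinor `ψ₀`. If `U` is empty or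
everything and `#T + #U` is even, then `Z_T X_U` multiplies `ψ₀` by `i^#U (-1)^{#(T ∩ {0})}`; the
last condition says that the phase of the word cancels this eigenvalue. -/
abbrev PauliWord.IsStabilizer (w : PauliWord (Fin 3)) : Prop :=
  (w.flip = ∅ ∨ w.flip = Finset.univ) ∧ Even (w.sign.card + w.flip.card) ∧
    4 ∣ w.phase + w.flip.card + 2 * (w.sign ∩ {0}).card

theorem PauliWord.IsStabilizer.toLin_psi0 {w : PauliWord (Fin 3)} (hw : w.IsStabilizer) :
    w.toLin psi0 = psi0 := by
  obtain ⟨hflip, hparity, m, hphase⟩ := hw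
  have heigen : I ^ w.phase * I ^ w.flip.card * (-1) ^ (w.sign ∩ {0}).card = 1 := by
    rw [← I_sq, ← pow_mul, ← pow_add, ← pow_add, hphase, pow_mul, I_pow_four, one_pow]
  funext S
  suffices (-1) ^ (w.sign ∩ S).card * psi0 (S ∆ w.flip) =
      I ^ w.flip.card * (-1) ^ (w.sign ∩ {0}).card * psi0 S by
    rw [PauliWord.toLin_apply, mul_assoc, this, ← mul_assoc, ← mul_assoc, heigen, one_mul]
  rcases hflip with h | h
  · have hsign : Even w.sign.card := by simpa [h] using hparity
    rw [h, ← Finset.bot_eq_empty, symmDiff_bot, neg_one_pow_card_inter_mul_psi0,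
      hsign.neg_one_pow]
    simp
  · have hsign : Odd w.sign.card := by
      rw [h] at hparity
      exact (Nat.even_add'.1 hparity).2 (by decide)
    have hsq : (-1 : ℂ) ^ S.card * (-1) ^ S.card = 1 := by
      rw [← pow_add, (Even.add_self _).neg_one_pow]
    calc (-1) ^ (w.sign ∩ S).card * psi0 (S ∆ w.flip)
        = I * (-1) ^ S.card * ((-1) ^ (w.sign ∩ S).card * psi0 S) := by
          rw [h, psi0_symmDiff_univ, mul_left_comm]
      _ = -I * ((-1) ^ S.card * (-1) ^ S.card) * (-1) ^ (w.sign ∩ {0}).card * psi0 S := by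
          rw [neg_one_pow_card_inter_mul_psi0, hsign.neg_one_pow]
          ring
      _ = I ^ w.flip.card * (-1) ^ (w.sign ∩ {0}).card * psi0 S := by
          rw [hsq, mul_one, h, Finset.card_univ, Fintype.card_fin, I_pow_three]

theorem gammaBasis_gammaBasis_psi0 {p q r : Fin 7}
    (h : (gammaWord r * (gammaWord p * gammaWord q)).IsStabilizer) :
    gammaBasis p (gammaBasis q psi0) = -gammaBasis r psi0 := by
  have hfix : gammaBasis r (gammaBasis p (gammaBasis q psi0)) = psi0 := by
    rw [gammaBasis_eq_toLin r, gammaBasis_eq_toLin p, gammaBasis_eq_toLin q,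
      PauliWord.toLin_toLin (gammaWord p), PauliWord.toLin_toLin, h.toLin_psi0]
  calc gammaBasis p (gammaBasis q psi0)
      = -gammaBasis r (gammaBasis r (gammaBasis p (gammaBasis q psi0))) := by
        rw [gammaBasis_gammaBasis_self, neg_neg]
    _ = -gammaBasis r psi0 := by rw [hfix]

/-- The vertical 2-form `ξ_{i+1} ∧ ξ_{i+2}` (indices mod 3) acting on spinors; it enters `Φ_i` with
coefficient `-1`. -/
def verticalOp (i : Fin 3) : SpinorRep →ₗ[ℂ] SpinorRep :=
  gammaBasis (xiIdx (i + 1)) ∘ₗ gammaBasis (xiIdx (i + 2))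

/-- The horizontal part of `Φ_i`, which involves only `e_4, …, e_7`, acting on spinors. -/
def horizontalOp : Fin 3 → (SpinorRep →ₗ[ℂ] SpinorRep)
  | 0 => -(gammaBasis 3 ∘ₗ gammaBasis 4) - gammaBasis 5 ∘ₗ gammaBasis 6
  | 1 => -(gammaBasis 3 ∘ₗ gammaBasis 5) + gammaBasis 4 ∘ₗ gammaBasis 6
  | 2 => -(gammaBasis 3 ∘ₗ gammaBasis 6) - gammaBasis 4 ∘ₗ gammaBasis 5

theorem PhiOp_apply_eq_sub (i : Fin 3) (ψ : SpinorRep) :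
    PhiOp i ψ = horizontalOp i ψ - verticalOp i ψ := by
  match i with
  | 0 =>
    change -gammaBasis 1 (gammaBasis 2 ψ) - _ - _ = -_ - _ - gammaBasis 1 (gammaBasis 2 ψ)
    abel
  | 1 =>
    change gammaBasis 0 (gammaBasis 2 ψ) - _ + _ = -_ + _ - gammaBasis 2 (gammaBasis 0 ψ)
    rw [gammaBasis_anticomm (p := 2) (by decide)]
    abel
  | 2 =>
    change -gammaBasis 0 (gammaBasis 1 ψ) - _ - _ = -_ - _ - gammaBasis 0 (gammaBasis 1 ψ)
    abel

theorem verticalOp_gammaBasis_self (i : Fin 3) (ψ : SpinorRep) :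
    verticalOp i (gammaBasis (xiIdx i) ψ) = gammaBasis (xiIdx i) (verticalOp i ψ) := by
  have h₁ : xiIdx i ≠ xiIdx (i + 1) := by revert i; decide
  have h₂ : xiIdx i ≠ xiIdx (i + 2) := by revert i; decide
  exact (gammaBasis_comm_mul h₁ h₂ ψ).symm

theorem verticalOp_gammaBasis_of_ne {i j : Fin 3} (hij : i ≠ j) (ψ : SpinorRep) :
    verticalOp i (gammaBasis (xiIdx j) ψ) = -gammaBasis (xiIdx j) (verticalOp i ψ) := by
  have h₁₂ : xiIdx (i + 1) ≠ xiIdx (i + 2) := by clear hij; revert i; decide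
  have hj : j = i + 1 ∨ j = i + 2 := by revert i j; decide
  simp only [verticalOp, LinearMap.comp_apply]
  rcases hj with rfl | rfl
  · rw [gammaBasis_anticomm h₁₂.symm, map_neg]
  · rw [gammaBasis_anticomm h₁₂.symm, neg_neg]

theorem horizontalOp_gammaBasis (i j : Fin 3) (ψ : SpinorRep) :
    horizontalOp i (gammaBasis (xiIdx j) ψ) = gammaBasis (xiIdx j) (horizontalOp i ψ) := by
  have hne : ∀ s : Fin 7, 3 ≤ s → xiIdx j ≠ s := by revert j; decide
  have hcomm (p q : Fin 7) (hp : 3 ≤ p := by decide) (hq : 3 ≤ q := by decide) :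
      gammaBasis p (gammaBasis q (gammaBasis (xiIdx j) ψ)) =
        gammaBasis (xiIdx j) (gammaBasis p (gammaBasis q ψ)) :=
    (gammaBasis_comm_mul (hne p hp) (hne q hq) ψ).symm
  fin_cases i <;>
    simp only [horizontalOp, LinearMap.sub_apply, LinearMap.add_apply, LinearMap.neg_apply,
      LinearMap.comp_apply, map_sub, map_add, map_neg, hcomm 3 4, hcomm 3 5, hcomm 3 6,
      hcomm 4 5, hcomm 4 6, hcomm 5 6]

theorem verticalOp_psi0 (i : Fin 3) : verticalOp i psi0 = psiAux i := by
  have h₁₂ : xiIdx (i + 1) ≠ xiIdx (i + 2) := by revert i; decide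
  have hstab : (gammaWord (xiIdx i) *
      (gammaWord (xiIdx (i + 2)) * gammaWord (xiIdx (i + 1)))).IsStabilizer := by
    revert i
    decide
  rw [verticalOp, LinearMap.comp_apply, gammaBasis_anticomm h₁₂,
    gammaBasis_gammaBasis_psi0 hstab, neg_neg, psiAux]

theorem horizontalOp_psi0 (i : Fin 3) : horizontalOp i psi0 = (2 : ℂ) • psiAux i := by
  match i with
  | 0 =>
    have h₃₄ : gammaBasis 3 (gammaBasis 4 psi0) = -psiAux 0 :=
      gammaBasis_gammaBasis_psi0 (by decide)
    have h₅₆ : gammaBasis 5 (gammaBasis 6 psi0) = -psiAux 0 :=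
      gammaBasis_gammaBasis_psi0 (by decide)
    simp only [horizontalOp, LinearMap.sub_apply, LinearMap.neg_apply, LinearMap.comp_apply, h₃₄,
      h₅₆]
    module
  | 1 =>
    have h₃₅ : gammaBasis 3 (gammaBasis 5 psi0) = -psiAux 1 :=
      gammaBasis_gammaBasis_psi0 (by decide)
    have h₆₄ : gammaBasis 6 (gammaBasis 4 psi0) = -psiAux 1 :=
      gammaBasis_gammaBasis_psi0 (by decide)
    have h₄₆ : gammaBasis 4 (gammaBasis 6 psi0) = psiAux 1 := by
      rw [gammaBasis_anticomm (by decide), h₆₄, neg_neg]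
    simp only [horizontalOp, LinearMap.add_apply, LinearMap.neg_apply, LinearMap.comp_apply, h₃₅,
      h₄₆]
    module
  | 2 =>
    have h₃₆ : gammaBasis 3 (gammaBasis 6 psi0) = -psiAux 2 :=
      gammaBasis_gammaBasis_psi0 (by decide)
    have h₄₅ : gammaBasis 4 (gammaBasis 5 psi0) = -psiAux 2 :=
      gammaBasis_gammaBasis_psi0 (by decide)
    simp only [horizontalOp, LinearMap.sub_apply, LinearMap.neg_apply, LinearMap.comp_apply, h₃₆,
      h₄₅]
    module

theorem PhiOp_psi0 (i : Fin 3) : PhiOp i psi0 = psiAux i := by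
  rw [PhiOp_apply_eq_sub, horizontalOp_psi0, verticalOp_psi0]
  module

theorem PhiOp_psiAux_self (i : Fin 3) :
    PhiOp i (psiAux i) = gammaBasis (xiIdx i) (psiAux i) := by
  calc PhiOp i (psiAux i)
      = gammaBasis (xiIdx i) (PhiOp i psi0) := by
        rw [PhiOp_apply_eq_sub, PhiOp_apply_eq_sub, psiAux, horizontalOp_gammaBasis,
          verticalOp_gammaBasis_self, map_sub]
    _ = gammaBasis (xiIdx i) (psiAux i) := by rw [PhiOp_psi0]

theorem PhiOp_psiAux_of_ne {i j : Fin 3} (hij : i ≠ j) :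
    PhiOp i (psiAux j) = (-3 : ℂ) • gammaBasis (xiIdx i) (psiAux j) := by
  have hxi : xiIdx j ≠ xiIdx i := by revert i j; decide
  calc PhiOp i (psiAux j)
      = gammaBasis (xiIdx j) (horizontalOp i psi0 + verticalOp i psi0) := by
        rw [PhiOp_apply_eq_sub, psiAux, horizontalOp_gammaBasis, verticalOp_gammaBasis_of_ne hij,
          sub_neg_eq_add, map_add]
    _ = (3 : ℂ) • gammaBasis (xiIdx j) (psiAux i) := by
        rw [horizontalOp_psi0, verticalOp_psi0, map_add, map_smul]
        module
    _ = (-3 : ℂ) • gammaBasis (xiIdx i) (psiAux j) := by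
        rw [psiAux, gammaBasis_anticomm hxi, ← psiAux, smul_neg, neg_smul]

/-- For all `i ≠ j` in `{1,2,3}`:
`Φ_i·ψ₀ = ψ_i`, `Φ_i·ψ_i = ξ_i·ψ_i`, and `Φ_i·ψ_j = -3 ξ_i·ψ_j`. -/
theorem statement_13 (i j : Fin 3) (hij : i ≠ j) :
    PhiOp i psi0 = psiAux i ∧
    PhiOp i (psiAux i) = gammaBasis (xiIdx i) (psiAux i) ∧
    PhiOp i (psiAux j) = (-3 : ℂ) • gammaBasis (xiIdx i) (psiAux j) :=
  ⟨PhiOp_psi0 i, PhiOp_psiAux_self i, PhiOp_psiAux_of_ne hij⟩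
end
end
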